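/- arXiv:1507.06908 — 2 statements merged into one kernel-verified Lean document; each statement's English description precedes it below -/
import Mathlib

section
/- (Controller Existence) Suppose H ≤ PL₊(I) is a chainless group with a single orbital A, and suppose some element h ∈ H realises one end of A. Let H̊_A be the subgroup of H consisting of all elements of H which act as the identity on some neighbourhood (in A) of each end of A. Then there exists an element c ∈ H such that H = ⟨c, H̊_A⟩ and c realises the orbital A (i.e., A is an orbital of c). Moreover, for each h ∈ H there exist a unique integer k and a unique element h̊ ∈ H̊_A with h = c^k h̊. -/
open Set

namespace PLPaper

/-- We model `PL₊(I)` inside the group of bijections of `ℝ` with *opposite*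
composition, so that the group acts on `ℝ` on the right:
`x · (g * h) = (x · g) · h`. -/
abbrev PermR : Type := (Equiv.Perm ℝ)ᵐᵒᵖ

/-- The (right) action of `g` on the point `x`. -/
def ap (g : PermR) (x : ℝ) : ℝ := g.unop x

/-- `g` is affine on a neighbourhood of `x`. -/
def IsLocallyAffineAt (g : PermR) (x : ℝ) : Prop :=
  ∃ m b : ℝ, ∀ᶠ y in nhds x, ap g y = m * y + b

/-- The breakpoints of `g`: points of `(0,1)` where `g` is not locally affine
(equivalently, for a PL map, where the derivative fails to exist). -/
def Breakpoints (g : PermR) : Set ℝ :=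
  {x ∈ Ioo (0:ℝ) 1 | ¬ IsLocallyAffineAt g x}

/-- `g` is an orientation-preserving piecewise-linear homeomorphism of `[0,1]`
(extended by the identity to all of `ℝ`), with finitely many breakpoints. -/
def IsPL (g : PermR) : Prop :=
  StrictMono (ap g) ∧ (∀ x ∉ Ioo (0:ℝ) 1, ap g x = x) ∧ (Breakpoints g).Finite

/-- The support of `g`. -/
def Supp (g : PermR) : Set ℝ := {x | ap g x ≠ x}

/-- `(a,b)` is an orbital of `g`, i.e. a connected component of `Supp g`. -/
def IsOrbital (g : PermR) (a b : ℝ) : Prop :=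
  a < b ∧ Ioo a b ⊆ Supp g ∧ a ∉ Supp g ∧ b ∉ Supp g

/-- The support of a subgroup `G`. -/
def GSupp (G : Subgroup PermR) : Set ℝ := ⋃ g ∈ (G : Set PermR), Supp g

/-- `(a,b)` is an orbital of the group `G`, i.e. a connected component of its support. -/
def IsGroupOrbital (G : Subgroup PermR) (a b : ℝ) : Prop :=
  a < b ∧ Ioo a b ⊆ GSupp G ∧ a ∉ GSupp G ∧ b ∉ GSupp G

/-- The pair `g, h` carries a transition chain: orbitals `(a,b)` of `g` and
`(c,d)` of `h` with `a < c < b < d`. -/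
def ElemsTransitionChain (g h : PermR) : Prop :=
  ∃ a b c d : ℝ, IsOrbital g a b ∧ IsOrbital h c d ∧ a < c ∧ c < b ∧ b < d

/-- The pair `g, h` carries a one-sided overlap: orbitals `(a,b)` of `g` and
`(a,c)` of `h`, or `(a,b)` of `g` and `(c,b)` of `h`, where `a < c < b`. -/
def ElemsOneSidedOverlap (g h : PermR) : Prop :=
  ∃ a b c : ℝ, a < c ∧ c < b ∧
    ((IsOrbital g a b ∧ IsOrbital h a c) ∨ (IsOrbital g a b ∧ IsOrbital h c b))

def AdmitsTransitionChain (G : Subgroup PermR) : Prop :=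
  ∃ g ∈ G, ∃ h ∈ G, ElemsTransitionChain g h

def AdmitsOneSidedOverlap (G : Subgroup PermR) : Prop :=
  ∃ g ∈ G, ∃ h ∈ G, ElemsOneSidedOverlap g h

/-- `G` admits a bad overlap: orbitals `A` of `f ∈ G` and `B` of `g ∈ G` which
intersect, are distinct, and neither closure is contained in the other orbital. -/
def AdmitsBadOverlap (G : Subgroup PermR) : Prop :=
  ∃ f ∈ G, ∃ g ∈ G, ∃ a b c d : ℝ, IsOrbital f a b ∧ IsOrbital g c d ∧
    (Ioo a b ∩ Ioo c d).Nonempty ∧ Ioo a b ≠ Ioo c d ∧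
    ¬ Icc a b ⊆ Ioo c d ∧ ¬ Icc c d ⊆ Ioo a b

/-- A tower: a set of signed orbitals `((a,b), g)` with pairwise nested orbitals,
where equal orbitals force equal signatures. -/
def IsTower (T : Set ((ℝ × ℝ) × PermR)) : Prop :=
  (∀ p ∈ T, IsOrbital p.2 p.1.1 p.1.2) ∧
  (∀ p ∈ T, ∀ q ∈ T,
      Ioo p.1.1 p.1.2 ⊆ Ioo q.1.1 q.1.2 ∨ Ioo q.1.1 q.1.2 ⊆ Ioo p.1.1 p.1.2) ∧
  (∀ p ∈ T, ∀ q ∈ T, p.1 = q.1 → p.2 = q.2)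

/-- `G` admits the tower `T` if `T` is a tower all of whose signatures lie in `G`. -/
def AdmitsTower (G : Subgroup PermR) (T : Set ((ℝ × ℝ) × PermR)) : Prop :=
  IsTower T ∧ ∀ p ∈ T, p.2 ∈ G

def AdmitsInfiniteTower (G : Subgroup PermR) : Prop :=
  ∃ T : Set ((ℝ × ℝ) × PermR), AdmitsTower G T ∧ T.Infinite

/-- The set of breakpoints of the elements of a set `S`. -/
def BreakSet (S : Set PermR) : Set ℝ := ⋃ g ∈ S, Breakpoints g

/-- The derived length of a group: the least `n` with `derivedSeries G n = ⊥`. -/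
noncomputable def derivedLength (G : Type*) [Group G] : ℕ :=
  sInf {n : ℕ | derivedSeries G n = ⊥}

def RealisesLeftEnd (g : PermR) (a d : ℝ) : Prop := ∃ b : ℝ, b ≤ d ∧ IsOrbital g a b

def RealisesRightEnd (g : PermR) (a d : ℝ) : Prop := ∃ c : ℝ, a ≤ c ∧ IsOrbital g c d

/-- `g` acts as the identity on a neighbourhood (inside `(a,b)`) of each end of `(a,b)`. -/
def FixesEnds (g : PermR) (a b : ℝ) : Prop :=
  ∃ ε > 0, (∀ x ∈ Ioo a (a + ε), ap g x = x) ∧ (∀ x ∈ Ioo (b - ε) b, ap g x = x)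

/-! The slope at the left end of `(a, b)` is a homomorphism from `H` to the positive reals.
Chainlessness forces an element of slope different from `1` at one end to have all of `(a, b)` as
an orbital: otherwise a commutator acting trivially near that end fixes the inner endpoint `d` of
an orbital of `g`, so `g` fixes every translate of `d`, including one inside the orbital. Hence
the kernel of the slope is the group of elements acting trivially near both ends, and a controller
exists as soon as the image of the slope is cyclic, that is, discrete.

Suppose the image is not discrete. For `w` the infimum of the translates of a point by expanding
elements, the kernel fixes `w`, so all elements commute on `w`. Conjugating by powers of one
element that contracts towards an end then shows that every `q` acts on `w` near each end as the
linear map given by its slope there. Transporting `w` from one end to the other yields a constant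
`κ` with `1 - ρ = κ (μ - 1)` for the slopes `μ`, `ρ` of every `q` that moves `w` slightly to the
right. As `w` can be moved arbitrarily little, this holds for some `q` together with its square,
so `ρ = μ`, which contradicts `ρ < 1 < μ`. -/

open Filter Topology

theorem existsUnique_zpow_mul_ker {G A : Type*} [Group G] [Group A] (φ : G →* A) {c g : G}
    (hc : ¬ IsOfFinOrder (φ c)) (hg : φ g ∈ Subgroup.zpowers (φ c)) :
    ∃! p : ℤ × G, p.2 ∈ φ.ker ∧ g = c ^ p.1 * p.2 := by
  obtain ⟨n, hn⟩ := Subgroup.mem_zpowers_iff.1 hg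
  refine ⟨(n, (c ^ n)⁻¹ * g), ⟨?_, (mul_inv_cancel_left _ _).symm⟩, ?_⟩
  · rw [φ.mem_ker, map_mul, map_inv, map_zpow, hn, inv_mul_cancel]
  · rintro ⟨k, r⟩ ⟨hr, rfl⟩
    have hk : n = k := by
      apply injective_zpow_iff_not_isOfFinOrder.2 hc
      simpa only [map_mul, map_zpow, φ.mem_ker.1 hr, mul_one] using hn
    rw [hk, inv_mul_cancel_left]

instance instMulArchimedeanPositive {K : Type*} [Field K] [LinearOrder K] [IsStrictOrderedRing K]
    [Archimedean K] : MulArchimedean {x : K // 0 < x} where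
  arch x _ hy := pow_unbounded_of_one_lt x.1 hy |>.imp fun _ hn => hn.le

instance instDenselyOrderedPositive {K : Type*} [Field K] [LinearOrder K]
    [IsStrictOrderedRing K] : DenselyOrdered {x : K // 0 < x} :=
  inferInstanceAs (DenselyOrdered (Ioi (0 : K)))

theorem exists_eqOn_affine_closure {f : ℝ → ℝ} (hf : Continuous f) {s : Set ℝ}
    (hs : IsPreconnected s) (hne : s.Nonempty)
    (h : ∀ x ∈ s, ∃ m b : ℝ, ∀ᶠ y in 𝓝 x, f y = m * y + b) :
    ∃ m b : ℝ, EqOn f (fun x => m * x + b) (closure s) := by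
  have analyticAt_affine (m b x : ℝ) : AnalyticAt ℝ (fun y => m * y + b) x := by fun_prop
  have analyticOnNhd_f : AnalyticOnNhd ℝ f s := fun x hx => by
    obtain ⟨m, b, hmb⟩ := h x hx
    exact (analyticAt_affine m b x).congr (EventuallyEq.symm hmb)
  obtain ⟨x₀, hx₀⟩ := hne
  obtain ⟨m, b, hmb⟩ := h x₀ hx₀
  exact ⟨m, b, (analyticOnNhd_f.eqOn_of_preconnected_of_eventuallyEq
    (fun x _ => analyticAt_affine m b x) hs hx₀ hmb).closure hf (by fun_prop)⟩

theorem notMem_of_mem_frontier {X : Type*} [TopologicalSpace X] {s : Set X} {p : X}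
    (hs : IsOpen s) (hp : p ∈ frontier s) : p ∉ s :=
  disjoint_left.1 (disjoint_frontier_iff_isOpen.2 hs) hp

theorem derivWithin_of_eventually_affine {f : ℝ → ℝ} {s : Set ℝ} {p m : ℝ}
    (hs : UniqueDiffWithinAt ℝ s p) (h : ∀ᶠ x in 𝓝[s] p, f x = f p + m * (x - p)) :
    derivWithin f s p = m := by
  have hderiv : HasDerivWithinAt (fun x => f p + m * (x - p)) m s p := by
    simpa using (((hasDerivWithinAt_id p s).sub_const p).const_mul m).const_add (f p)
  exact (hderiv.congr_of_eventuallyEq h (by simp)).derivWithin hs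

theorem eq_affine_of_commute_contraction {s : Set ℝ} {p μ m : ℝ} {f q : ℝ → ℝ} (hμ₀ : μ ≠ 0)
    (hμ : |μ| < 1) (hfs : MapsTo f s s) (hf : ∀ x ∈ s, f x = p + μ * (x - p))
    (hq : ∀ᶠ x in 𝓝[s] p, q x = p + m * (x - p)) {x : ℝ} (hx : x ∈ s) (hqx : q x ∈ s)
    (hcomm : ∀ n : ℕ, q (f^[n] x) = f^[n] (q x)) : q x = p + m * (x - p) := by
  have iterate_eq (y : ℝ) (hy : y ∈ s) (n : ℕ) : f^[n] y = p + μ ^ n * (y - p) := by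
    induction n with
    | zero => simp
    | succ n ih =>
      rw [Function.iterate_succ_apply', hf _ (hfs.iterate n hy), ih]
      ring
  have tendsto_iterate : Tendsto (fun n => f^[n] x) atTop (𝓝[s] p) := by
    refine tendsto_nhdsWithin_iff.2 ⟨?_, Eventually.of_forall fun n => hfs.iterate n hx⟩
    simpa [iterate_eq x hx] using
      ((tendsto_pow_atTop_nhds_zero_of_abs_lt_one hμ).mul_const (x - p)).const_add p
  obtain ⟨n, hn⟩ := (tendsto_iterate.eventually hq).exists
  rw [hcomm, iterate_eq _ hqx, iterate_eq x hx] at hn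
  apply mul_left_cancel₀ (pow_ne_zero n hμ₀)
  linarith

theorem ap_mul (g h : PermR) (x : ℝ) : ap (g * h) x = ap h (ap g x) := rfl

theorem ap_one (x : ℝ) : ap 1 x = x := rfl

theorem ap_inv_ap (g : PermR) (x : ℝ) : ap g⁻¹ (ap g x) = x := by
  rw [← ap_mul, mul_inv_cancel, ap_one]

theorem ap_ap_inv (g : PermR) (x : ℝ) : ap g (ap g⁻¹ x) = x := by
  rw [← ap_mul, inv_mul_cancel, ap_one]

theorem ap_pow (g : PermR) (n : ℕ) : ap (g ^ n) = (ap g)^[n] := by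
  induction n with
  | zero => rfl
  | succ n ih => rw [pow_succ, Function.iterate_succ', ← ih]; rfl

theorem notMem_supp {g : PermR} {x : ℝ} : x ∉ Supp g ↔ ap g x = x := not_not

theorem IsOrbital.notMem_Ioo {g : PermR} {c d x : ℝ} (h : IsOrbital g c d) (hx : ap g x = x) :
    x ∉ Ioo c d := fun hmem => h.2.1 hmem hx

theorem exists_isOrbital_of_mem_Icc {g : PermR} (hg : Continuous (ap g)) {x p q : ℝ}
    (hx : x ∈ Supp g) (hxpq : x ∈ Icc p q) (hp : ap g p = p) (hq : ap g q = q) :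
    ∃ c d, IsOrbital g c d ∧ x ∈ Ioo c d := by
  have isClosed_fixed : IsClosed {y | ap g y = y} := isClosed_eq hg continuous_id
  obtain ⟨c, ⟨⟨hpc, hcx⟩, hc⟩, hc_max⟩ :=
    ((isCompact_Icc (a := p) (b := x)).inter_right isClosed_fixed).exists_isGreatest
      ⟨p, left_mem_Icc.2 hxpq.1, hp⟩
  obtain ⟨d, ⟨⟨hxd, hdq⟩, hd⟩, hd_min⟩ :=
    ((isCompact_Icc (a := x) (b := q)).inter_right isClosed_fixed).exists_isLeast
      ⟨q, right_mem_Icc.2 hxpq.2, hq⟩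
  have hcx : c < x := hcx.lt_of_ne (by rintro rfl; exact hx hc)
  have hxd : x < d := hxd.lt_of_ne (by rintro rfl; exact hx hd)
  refine ⟨c, d, ⟨hcx.trans hxd, fun y hy hfix => ?_, notMem_supp.2 hc, notMem_supp.2 hd⟩, hcx, hxd⟩
  rcases le_total y x with hyx | hxy
  · exact hy.1.not_ge (hc_max ⟨⟨hpc.trans hy.1.le, hyx⟩, hfix⟩)
  · exact hy.2.not_ge (hd_min ⟨⟨hxy, hy.2.le.trans hdq⟩, hfix⟩)

theorem IsOrbital.lt_ap_of_lt_ap {g : PermR} {c d x y : ℝ} (h : IsOrbital g c d)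
    (hg : Continuous (ap g)) (hx : x ∈ Ioo c d) (hy : y ∈ Ioo c d) (hxg : x < ap g x) :
    y < ap g y := by
  by_contra! hyg
  obtain ⟨z, hz, hgz⟩ := isPreconnected_Ioo.intermediate_value₂ hx hy continuousOn_id
    hg.continuousOn hxg.le hyg
  exact h.notMem_Ioo hgz.symm hz

theorem fixesEnds_iff_eventually {g : PermR} {a b : ℝ} (hab : a < b) :
    FixesEnds g a b ↔
      (∀ᶠ x in 𝓝[Ioo a b] a, ap g x = x) ∧ ∀ᶠ x in 𝓝[Ioo a b] b, ap g x = x := by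
  rw [nhdsWithin_Ioo_eq_nhdsGT hab, nhdsWithin_Ioo_eq_nhdsLT hab]
  constructor
  · rintro ⟨ε, hε, hleft, hright⟩
    exact ⟨mem_of_superset (Ioo_mem_nhdsGT (by linarith)) hleft,
      mem_of_superset (Ioo_mem_nhdsLT (by linarith)) hright⟩
  · rintro ⟨hleft, hright⟩
    obtain ⟨u, hau, hu⟩ := mem_nhdsGT_iff_exists_Ioo_subset.1 hleft
    obtain ⟨v, hvb, hv⟩ := mem_nhdsLT_iff_exists_Ioo_subset.1 hright
    refine ⟨min (u - a) (b - v), lt_min (sub_pos.2 hau) (sub_pos.2 hvb), fun x hx => hu ?_,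
      fun x hx => hv ?_⟩
    · exact ⟨hx.1, by linarith [hx.2, min_le_left (u - a) (b - v)]⟩
    · exact ⟨by linarith [hx.1, min_le_right (u - a) (b - v)], hx.2⟩

namespace IsPL

variable {g : PermR}

theorem continuous_ap (hg : IsPL g) : Continuous (ap g) :=
  hg.1.monotone.continuous_of_surjective fun y => ⟨ap g⁻¹ y, ap_ap_inv g y⟩

theorem isLocallyAffineAt_of_notMem_Icc (hg : IsPL g) {x : ℝ} (hx : x ∉ Icc (0 : ℝ) 1) :
    IsLocallyAffineAt g x := by
  refine ⟨1, 0, ?_⟩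
  filter_upwards [isClosed_Icc.isOpen_compl.mem_nhds hx] with y hy
  rw [hg.2.1 y fun hmem => hy (Ioo_subset_Icc_self hmem), one_mul, add_zero]

theorem eventually_isLocallyAffineAt (hg : IsPL g) (p : ℝ) :
    ∀ᶠ x in 𝓝[≠] p, IsLocallyAffineAt g x := by
  have finite_exceptions : (Breakpoints g ∪ {0, 1}).Finite := hg.2.2.union (by simp)
  filter_upwards [disjoint_principal_right.1
    (mem_codiscrete.1 finite_exceptions.compl_mem_codiscrete p)] with x hx
  simp only [compl_compl, mem_compl_iff, mem_union, mem_insert_iff, mem_singleton_iff,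
    not_or] at hx
  by_contra hnot
  refine hx.1 ⟨?_, hnot⟩
  have hmem : x ∈ Icc (0 : ℝ) 1 := of_not_not fun h => hnot (hg.isLocallyAffineAt_of_notMem_Icc h)
  exact ⟨hmem.1.lt_of_ne' hx.2.1, hmem.2.lt_of_ne hx.2.2⟩

theorem eventually_ap_eq_affine (hg : IsPL g) {s : Set ℝ} {p : ℝ} (hs : Convex ℝ s)
    (hopen : IsOpen s) (hp : p ∈ frontier s) :
    ∀ᶠ x in 𝓝[s] p, ap g x = ap g p + derivWithin (ap g) s p * (x - p) := by
  have hps := notMem_of_mem_frontier hopen hp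
  have hpcl := frontier_subset_closure hp
  obtain ⟨ε, hε, hball⟩ := Metric.mem_nhdsWithin_iff.1 (hg.eventually_isLocallyAffineAt p)
  have hball_nhds : Metric.ball p ε ∈ 𝓝 p := Metric.ball_mem_nhds p hε
  have hp' : p ∈ closure (s ∩ Metric.ball p ε) := by
    rw [mem_closure_iff_nhdsWithin_neBot, nhdsWithin_inter_of_mem' (nhdsWithin_le_nhds hball_nhds)]
    exact mem_closure_iff_nhdsWithin_neBot.1 hpcl
  obtain ⟨m, k, hmk⟩ := exists_eqOn_affine_closure hg.continuous_ap
    (hs.inter (convex_ball p ε)).isPreconnected (closure_nonempty_iff.1 ⟨p, hp'⟩)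
    fun x hx => hball ⟨hx.2, ne_of_mem_of_not_mem hx.1 hps⟩
  have affine : ∀ᶠ x in 𝓝[s] p, ap g x = ap g p + m * (x - p) := by
    filter_upwards [inter_mem_nhdsWithin s hball_nhds] with x hx
    rw [hmk (subset_closure hx), hmk hp']
    ring
  have hunique : UniqueDiffWithinAt ℝ s p :=
    uniqueDiffWithinAt_convex hs (hopen.interior_eq.symm ▸ closure_nonempty_iff.1 ⟨p, hpcl⟩) hpcl
  rwa [derivWithin_of_eventually_affine hunique affine]

theorem derivWithin_pos (hg : IsPL g) {s : Set ℝ} {p : ℝ} (hs : Convex ℝ s)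
    (hopen : IsOpen s) (hp : p ∈ frontier s) : 0 < derivWithin (ap g) s p := by
  have hps := notMem_of_mem_frontier hopen hp
  have : (𝓝[s] p).NeBot := mem_closure_iff_nhdsWithin_neBot.1 (frontier_subset_closure hp)
  obtain ⟨x, hx, hxs⟩ :=
    ((hg.eventually_ap_eq_affine hs hopen hp).and self_mem_nhdsWithin).exists
  rcases (ne_of_mem_of_not_mem hxs hps).lt_or_gt with hxp | hpx
  · have := hg.1 hxp
    exact pos_of_mul_neg_left (by linarith) (sub_neg.2 hxp).le
  · have := hg.1 hpx
    exact pos_of_mul_pos_left (by linarith) (sub_pos.2 hpx).le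

theorem exists_isOrbital (hg : IsPL g) {x : ℝ} (hx : x ∈ Supp g) :
    ∃ c d, IsOrbital g c d ∧ x ∈ Ioo c d :=
  have hx01 : x ∈ Ioo (0 : ℝ) 1 := of_not_not fun h => hx (hg.2.1 x h)
  exists_isOrbital_of_mem_Icc hg.continuous_ap hx (Ioo_subset_Icc_self hx01)
    (hg.2.1 0 (by simp)) (hg.2.1 1 (by simp))

end IsPL

theorem ap_endpoints_of_fixed_mem_orbital {H : Subgroup PermR}
    (hH : ¬ AdmitsTransitionChain H) {g f : PermR} (hg : g ∈ H) (hf : f ∈ H) (hfPL : IsPL f)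
    {c d z : ℝ} (hgcd : IsOrbital g c d) (hz : z ∈ Ioo c d) (hfz : ap f z = z) :
    ap f c = c ∧ ap f d = d := by
  constructor <;> by_contra hmoved <;>
    obtain ⟨r, t, hrt, hr, ht⟩ := hfPL.exists_isOrbital hmoved
  · have : t ≤ z := not_lt.1 fun h => hrt.notMem_Ioo hfz ⟨hr.trans hz.1, h⟩
    exact hH ⟨f, hf, g, hg, r, t, c, d, hrt, hgcd, hr, ht, this.trans_lt hz.2⟩
  · have : z ≤ r := not_lt.1 fun h => hrt.notMem_Ioo hfz ⟨h, hz.2.trans ht⟩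
    exact hH ⟨g, hg, f, hf, c, d, r, t, hgcd, hrt, hz.1.trans_le this, hr, ht⟩


/-- A group of piecewise-linear homeomorphisms whose only orbital is `(a, b)`. -/
structure HasSingleOrbital (H : Subgroup PermR) (a b : ℝ) : Prop where
  lt : a < b
  isPL : ∀ g ∈ H, IsPL g
  gSupp_eq : GSupp H = Ioo a b

namespace HasSingleOrbital

variable {H : Subgroup PermR} {a b p x : ℝ}

theorem strictMono (hH : HasSingleOrbital H a b) (g : H) : StrictMono (ap g) :=
  (hH.isPL g g.2).1

theorem continuous (hH : HasSingleOrbital H a b) (g : H) : Continuous (ap g) :=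
  (hH.isPL g g.2).continuous_ap

theorem supp_subset (hH : HasSingleOrbital H a b) (g : H) : Supp g ⊆ Ioo a b :=
  hH.gSupp_eq ▸ subset_biUnion_of_mem (u := Supp) g.2

theorem ap_eq_self (hH : HasSingleOrbital H a b) (g : H) (hx : x ∉ Ioo a b) :
    ap g x = x :=
  notMem_supp.1 fun h => hx (hH.supp_subset g h)

theorem mapsTo_ap (hH : HasSingleOrbital H a b) (g : H) :
    MapsTo (ap g) (Ioo a b) (Ioo a b) := fun x hx => by
  constructor
  · simpa only [hH.ap_eq_self g left_notMem_Ioo] using hH.strictMono g hx.1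
  · simpa only [hH.ap_eq_self g right_notMem_Ioo] using hH.strictMono g hx.2

theorem exists_ap_lt (hH : HasSingleOrbital H a b) (hx : x ∈ Ioo a b) :
    ∃ g : H, ap g x < x := by
  obtain ⟨g, hg, hgx⟩ := mem_iUnion₂.1 (hH.gSupp_eq.symm ▸ hx : x ∈ GSupp H)
  rcases lt_or_gt_of_ne hgx with hlt | hgt
  · exact ⟨⟨g, hg⟩, hlt⟩
  · refine ⟨⟨g, hg⟩⁻¹, ?_⟩
    simpa only [InvMemClass.coe_inv, ap_inv_ap] using hH.strictMono ⟨g, hg⟩⁻¹ hgt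

theorem exists_lt_ap (hH : HasSingleOrbital H a b) (hx : x ∈ Ioo a b) :
    ∃ g : H, x < ap g x := by
  obtain ⟨g, hg⟩ := hH.exists_ap_lt hx
  refine ⟨g⁻¹, ?_⟩
  simpa only [InvMemClass.coe_inv, ap_inv_ap] using hH.strictMono g⁻¹ hg

theorem left_mem_frontier (hH : HasSingleOrbital H a b) : a ∈ frontier (Ioo a b) := by
  simp [frontier_Ioo hH.lt]

theorem right_mem_frontier (hH : HasSingleOrbital H a b) : b ∈ frontier (Ioo a b) := by
  simp [frontier_Ioo hH.lt]

theorem eventually_ap_eq_affine (hH : HasSingleOrbital H a b) (hp : p ∈ frontier (Ioo a b))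
    (g : H) : ∀ᶠ x in 𝓝[Ioo a b] p,
      ap g x = p + derivWithin (ap g) (Ioo a b) p * (x - p) := by
  simpa only [hH.ap_eq_self g (notMem_of_mem_frontier isOpen_Ioo hp)] using
    (hH.isPL g g.2).eventually_ap_eq_affine (convex_Ioo a b) isOpen_Ioo hp

theorem derivWithin_pos (hH : HasSingleOrbital H a b) (hp : p ∈ frontier (Ioo a b)) (g : H) :
    0 < derivWithin (ap g) (Ioo a b) p :=
  (hH.isPL g g.2).derivWithin_pos (convex_Ioo a b) isOpen_Ioo hp

theorem derivWithin_mul (hH : HasSingleOrbital H a b) (hp : p ∈ frontier (Ioo a b)) (g h : H) :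
    derivWithin (ap (g * h : H)) (Ioo a b) p =
      derivWithin (ap g) (Ioo a b) p * derivWithin (ap h) (Ioo a b) p := by
  have hgp : ap g p = p := hH.ap_eq_self g (notMem_of_mem_frontier isOpen_Ioo hp)
  have differentiable (k : H) : DifferentiableWithinAt ℝ (ap k) (Ioo a b) p :=
    differentiableWithinAt_of_derivWithin_ne_zero (hH.derivWithin_pos hp k).ne'
  rw [mul_comm, show ap (g * h : H) = ap h ∘ ap g from rfl,
    derivWithin_comp p (by rw [hgp]; exact differentiable h) (differentiable g)
      (hH.mapsTo_ap g), hgp]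

/-- The one-sided derivative at an end `p` of the orbital `(a, b)`, as a homomorphism to the
positive reals. -/
noncomputable def slope (hH : HasSingleOrbital H a b) (hp : p ∈ frontier (Ioo a b)) :
    H →* {x : ℝ // 0 < x} :=
  MonoidHom.mk' (fun g => ⟨derivWithin (ap g) (Ioo a b) p, hH.derivWithin_pos hp g⟩)
    fun g h => Subtype.ext (hH.derivWithin_mul hp g h)

/-- The slope of the elements of `H` at the left end of the orbital. -/
noncomputable abbrev leftSlope (hH : HasSingleOrbital H a b) : H →* {x : ℝ // 0 < x} :=
  hH.slope hH.left_mem_frontier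

/-- The slope of the elements of `H` at the right end of the orbital. -/
noncomputable abbrev rightSlope (hH : HasSingleOrbital H a b) : H →* {x : ℝ // 0 < x} :=
  hH.slope hH.right_mem_frontier

theorem eventually_ap_eq (hH : HasSingleOrbital H a b) (hp : p ∈ frontier (Ioo a b)) (g : H) :
    ∀ᶠ x in 𝓝[Ioo a b] p, ap g x = p + hH.slope hp g * (x - p) :=
  hH.eventually_ap_eq_affine hp g

theorem eventually_ne_of_slope_ne_one (hH : HasSingleOrbital H a b)
    (hp : p ∈ frontier (Ioo a b)) {g : H} (hg : hH.slope hp g ≠ 1) :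
    ∀ᶠ x in 𝓝[Ioo a b] p, ap g x ≠ x := by
  filter_upwards [hH.eventually_ap_eq hp g, self_mem_nhdsWithin] with x hx hmem hfix
  have hxp : x - p ≠ 0 :=
    sub_ne_zero.2 (ne_of_mem_of_not_mem hmem (notMem_of_mem_frontier isOpen_Ioo hp))
  refine hg (Subtype.ext (mul_right_cancel₀ hxp ?_))
  rw [Positive.val_one, one_mul]
  linarith

theorem slope_eq_one_iff (hH : HasSingleOrbital H a b) (hp : p ∈ frontier (Ioo a b)) {g : H} :
    hH.slope hp g = 1 ↔ ∀ᶠ x in 𝓝[Ioo a b] p, ap g x = x := by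
  constructor
  · intro hg
    filter_upwards [hH.eventually_ap_eq hp g] with x hx
    rw [hx, hg, Positive.val_one, one_mul, add_sub_cancel]
  · intro hg
    by_contra hne
    have := mem_closure_iff_nhdsWithin_neBot.1 (frontier_subset_closure hp)
    obtain ⟨x, hx, hx'⟩ := (hg.and (hH.eventually_ne_of_slope_ne_one hp hne)).exists
    exact hx' hx

end HasSingleOrbital

/-- A chainless group of piecewise-linear homeomorphisms whose only orbital is `(a, b)`. -/
structure IsChainlessOn (H : Subgroup PermR) (a b : ℝ) : Prop extends HasSingleOrbital H a b where
  not_admitsTransitionChain : ¬ AdmitsTransitionChain H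

namespace IsChainlessOn

variable {H : Subgroup PermR} {a b c d p x : ℝ} {g h : H}

theorem ap_ap_endpoints_eq (hH : IsChainlessOn H a b) (hgcd : IsOrbital g c d)
    (hp : p ∈ frontier (Ioo a b)) (hcd : Ioo c d ∈ 𝓝[Ioo a b] p) (k : H) :
    ap g (ap k c) = ap k c ∧ ap g (ap k d) = ap k d := by
  -- Slopes commute, so this commutator is the identity near `p` and fixes a point of `(c, d)`.
  let f : H := k * g * k⁻¹ * g⁻¹
  have hf : hH.slope hp f = 1 := by
    simp only [f, map_mul, map_inv]
    rw [mul_inv_cancel_comm, mul_inv_cancel]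
  have := mem_closure_iff_nhdsWithin_neBot.1 (frontier_subset_closure hp)
  obtain ⟨z, hfz, hz⟩ := (((hH.slope_eq_one_iff hp).1 hf).and hcd).exists
  have endpoint {e : ℝ} (he : ap g e = e) (hfe : ap f e = e) : ap g (ap k e) = ap k e := by
    calc ap g (ap k e) = ap k (ap g (ap f e)) := by
          change _ = ap k (ap g (ap (g : PermR)⁻¹ (ap (k : PermR)⁻¹ (ap g (ap k e)))))
          rw [ap_ap_inv, ap_ap_inv]
      _ = ap k e := by rw [hfe, he]
  obtain ⟨hfc, hfd⟩ := ap_endpoints_of_fixed_mem_orbital hH.not_admitsTransitionChain g.2 f.2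
    (hH.isPL f f.2) hgcd hz hfz
  exact ⟨endpoint (notMem_supp.1 hgcd.2.2.1) hfc, endpoint (notMem_supp.1 hgcd.2.2.2) hfd⟩

theorem isOrbital_of_isOrbital_left (hH : IsChainlessOn H a b) (hg : IsOrbital g a d)
    (hdb : d ≤ b) : IsOrbital g a b := by
  rcases hdb.eq_or_lt with rfl | hdb
  · exact hg
  obtain ⟨k, hk⟩ := hH.exists_ap_lt ⟨hg.1, hdb⟩
  have had : Ioo a d ∈ 𝓝[Ioo a b] a := by
    rw [nhdsWithin_Ioo_eq_nhdsGT hH.lt]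
    exact Ioo_mem_nhdsGT hg.1
  exact absurd ⟨(hH.mapsTo_ap k ⟨hg.1, hdb⟩).1, hk⟩
    (hg.notMem_Ioo (hH.ap_ap_endpoints_eq hg hH.left_mem_frontier had k).2)

theorem isOrbital_of_isOrbital_right (hH : IsChainlessOn H a b) (hg : IsOrbital g c b)
    (hac : a ≤ c) : IsOrbital g a b := by
  rcases hac.eq_or_lt with rfl | hac
  · exact hg
  obtain ⟨k, hk⟩ := hH.exists_lt_ap ⟨hac, hg.1⟩
  have hcb : Ioo c b ∈ 𝓝[Ioo a b] b := by
    rw [nhdsWithin_Ioo_eq_nhdsLT hH.lt]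
    exact Ioo_mem_nhdsLT hg.1
  exact absurd ⟨hk, (hH.mapsTo_ap k ⟨hac, hg.1⟩).2⟩
    (hg.notMem_Ioo (hH.ap_ap_endpoints_eq hg hH.right_mem_frontier hcb k).1)

theorem isOrbital_iff_slope_ne_one (hH : IsChainlessOn H a b) (hp : p ∈ frontier (Ioo a b)) :
    IsOrbital g a b ↔ hH.slope hp g ≠ 1 := by
  constructor
  · intro hg hone
    have := mem_closure_iff_nhdsWithin_neBot.1 (frontier_subset_closure hp)
    obtain ⟨x, hx, hmem⟩ :=
      (((hH.slope_eq_one_iff hp).1 hone).and self_mem_nhdsWithin).exists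
    exact hg.notMem_Ioo hx hmem
  intro hne
  have moved := (hH.eventually_ne_of_slope_ne_one hp hne).and self_mem_nhdsWithin
  rcases (frontier_Ioo hH.lt ▸ hp : p ∈ ({a, b} : Set ℝ)) with rfl | rfl
  · rw [nhdsWithin_Ioo_eq_nhdsGT hH.lt] at moved
    obtain ⟨u, hpu, hu⟩ := mem_nhdsGT_iff_exists_Ioo_subset.1 moved
    obtain ⟨x, hx⟩ := nonempty_Ioo.2 (mem_Ioi.1 hpu)
    obtain ⟨c, d, hgcd, hxcd⟩ := (hH.isPL g g.2).exists_isOrbital (hu hx).1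
    obtain ⟨hpc, hdb⟩ := (Ioo_subset_Ioo_iff hgcd.1).1 (hgcd.2.1.trans (hH.supp_subset g))
    obtain rfl : p = c := hpc.eq_of_not_lt fun hpc =>
      (hu ⟨hpc, hxcd.1.trans hx.2⟩).1 (notMem_supp.1 hgcd.2.2.1)
    exact hH.isOrbital_of_isOrbital_left hgcd hdb
  · rw [nhdsWithin_Ioo_eq_nhdsLT hH.lt] at moved
    obtain ⟨u, hup, hu⟩ := mem_nhdsLT_iff_exists_Ioo_subset.1 moved
    obtain ⟨x, hx⟩ := nonempty_Ioo.2 (mem_Iio.1 hup)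
    obtain ⟨c, d, hgcd, hxcd⟩ := (hH.isPL g g.2).exists_isOrbital (hu hx).1
    obtain ⟨hac, hdp⟩ := (Ioo_subset_Ioo_iff hgcd.1).1 (hgcd.2.1.trans (hH.supp_subset g))
    obtain rfl : d = p := hdp.eq_of_not_lt fun hdp =>
      (hu ⟨hx.1.trans hxcd.2, hdp⟩).1 (notMem_supp.1 hgcd.2.2.2)
    exact hH.isOrbital_of_isOrbital_right hgcd hac

theorem isOrbital_of_realises_end (hH : IsChainlessOn H a b)
    (hg : RealisesLeftEnd g a b ∨ RealisesRightEnd g a b) : IsOrbital g a b := by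
  rcases hg with ⟨d, hdb, hd⟩ | ⟨c, hac, hc⟩
  · exact hH.isOrbital_of_isOrbital_left hd hdb
  · exact hH.isOrbital_of_isOrbital_right hc hac

theorem leftSlope_eq_one_iff_rightSlope_eq_one (hH : IsChainlessOn H a b) :
    hH.leftSlope g = 1 ↔ hH.rightSlope g = 1 :=
  not_iff_not.1 ((hH.isOrbital_iff_slope_ne_one _).symm.trans (hH.isOrbital_iff_slope_ne_one _))

theorem fixesEnds_iff_mem_ker_leftSlope (hH : IsChainlessOn H a b) :
    FixesEnds g a b ↔ g ∈ hH.leftSlope.ker := by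
  rw [fixesEnds_iff_eventually hH.lt, ← hH.slope_eq_one_iff hH.left_mem_frontier,
    ← hH.slope_eq_one_iff hH.right_mem_frontier, MonoidHom.mem_ker]
  exact and_iff_left_of_imp hH.leftSlope_eq_one_iff_rightSlope_eq_one.1

theorem lt_ap_of_one_lt_leftSlope (hH : IsChainlessOn H a b) (hg : 1 < hH.leftSlope g)
    (hx : x ∈ Ioo a b) : x < ap g x := by
  have hga : IsOrbital g a b := (hH.isOrbital_iff_slope_ne_one hH.left_mem_frontier).2 hg.ne'
  have := mem_closure_iff_nhdsWithin_neBot.1 (frontier_subset_closure hH.left_mem_frontier)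
  obtain ⟨y, hgy, hy⟩ :=
    ((hH.eventually_ap_eq hH.left_mem_frontier g).and self_mem_nhdsWithin).exists
  refine hga.lt_ap_of_lt_ap (hH.continuous g) hy hx ?_
  have : 1 * (y - a) < hH.leftSlope g * (y - a) := mul_lt_mul_of_pos_right hg (sub_pos.2 hy.1)
  rw [hgy]
  linarith

theorem ap_lt_ap_of_leftSlope_lt (hH : IsChainlessOn H a b)
    (hgh : hH.leftSlope g < hH.leftSlope h) (hx : x ∈ Ioo a b) : ap g x < ap h x := by
  have hone : 1 < hH.leftSlope (h * g⁻¹) := by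
    rwa [map_mul, map_inv, ← div_eq_mul_inv, one_lt_div']
  have := hH.strictMono g (hH.lt_ap_of_one_lt_leftSlope hone hx)
  rwa [Subgroup.coe_mul, InvMemClass.coe_inv, ap_mul, ap_ap_inv] at this

theorem rightSlope_lt_one (hH : IsChainlessOn H a b) (hg : 1 < hH.leftSlope g) :
    hH.rightSlope g < 1 := by
  have := mem_closure_iff_nhdsWithin_neBot.1 (frontier_subset_closure hH.right_mem_frontier)
  obtain ⟨y, hgy, hy⟩ :=
    ((hH.eventually_ap_eq hH.right_mem_frontier g).and self_mem_nhdsWithin).exists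
  have hlt := hH.lt_ap_of_one_lt_leftSlope hg hy
  rw [hgy] at hlt
  refine lt_of_mul_lt_mul_of_nonneg_right (a := b - y) ?_ (sub_pos.2 hy.2).le
  rw [Positive.val_one]
  change (hH.slope hH.right_mem_frontier g : ℝ) * (b - y) < 1 * (b - y)
  linarith

theorem tendsto_iterate_ap (hH : IsChainlessOn H a b) (hg : 1 < hH.leftSlope g)
    (hx : x ∈ Ioo a b) : Tendsto (fun n => (ap g)^[n] x) atTop (𝓝[Ioo a b] b) := by
  have mem_Ioo (n : ℕ) : (ap g)^[n] x ∈ Ioo a b := (hH.mapsTo_ap g).iterate n hx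
  have monotone : Monotone fun n => (ap g)^[n] x :=
    (hH.strictMono g).monotone.monotone_iterate_of_le_map
      (hH.lt_ap_of_one_lt_leftSlope hg hx).le
  have bddAbove : BddAbove (range fun n => (ap g)^[n] x) :=
    ⟨b, forall_mem_range.2 fun n => (mem_Ioo n).2.le⟩
  have tendsto_iSup := tendsto_atTop_ciSup monotone bddAbove
  set l := ⨆ n, (ap g)^[n] x
  have hfix : ap g l = l := isFixedPt_of_tendsto_iterate tendsto_iSup (hH.continuous g).continuousAt
  have hal : a < l := hx.1.trans_le (le_ciSup bddAbove 0)
  obtain rfl : l = b := (ciSup_le fun n => (mem_Ioo n).2.le).eq_of_not_lt fun hlb =>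
    (hH.lt_ap_of_one_lt_leftSlope hg ⟨hal, hlb⟩).ne' hfix
  exact tendsto_nhdsWithin_iff.2 ⟨tendsto_iSup, Eventually.of_forall mem_Ioo⟩

/-- The images of `x` under the elements whose slope at the left end exceeds `1`. The elements of
slope `1` permute this set, hence they fix its infimum. -/
def expandingTranslates (hH : IsChainlessOn H a b) (x : ℝ) : Set ℝ :=
  (fun g : H => ap g x) '' {g | 1 < hH.leftSlope g}

theorem mem_lowerBounds_expandingTranslates (hH : IsChainlessOn H a b) (hx : x ∈ Ioo a b) :
    x ∈ lowerBounds (hH.expandingTranslates x) :=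
  forall_mem_image.2 fun _ hg => (hH.lt_ap_of_one_lt_leftSlope hg hx).le

theorem exists_isGLB_expandingTranslates (hH : IsChainlessOn H a b)
    (hg : 1 < hH.leftSlope g) (hx : x ∈ Ioo a b) :
    ∃ w, IsGLB (hH.expandingTranslates x) w :=
  Real.exists_isGLB ⟨_, mem_image_of_mem _ hg⟩ ⟨x, hH.mem_lowerBounds_expandingTranslates hx⟩

theorem image_expandingTranslates (hH : IsChainlessOn H a b) {k : H}
    (hk : k ∈ hH.leftSlope.ker) (x : ℝ) :
    ap k '' hH.expandingTranslates x = hH.expandingTranslates x := by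
  have mul_mem {g j : H} (hj : j ∈ hH.leftSlope.ker) (hg : 1 < hH.leftSlope g) :
      1 < hH.leftSlope (g * j) := by
    rwa [map_mul, MonoidHom.mem_ker.1 hj, mul_one]
  apply Subset.antisymm
  · rintro _ ⟨_, ⟨g, hg, rfl⟩, rfl⟩
    exact ⟨g * k, mul_mem hk hg, rfl⟩
  · rintro _ ⟨g, hg, rfl⟩
    exact ⟨ap (g * k⁻¹ : H) x, mem_image_of_mem _ (mul_mem (inv_mem hk) hg), ap_ap_inv k _⟩

theorem ap_eq_of_isGLB_expandingTranslates (hH : IsChainlessOn H a b) {w : ℝ}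
    (hw : IsGLB (hH.expandingTranslates x) w) {k : H} (hk : k ∈ hH.leftSlope.ker) :
    ap k w = w := by
  let e : ℝ ≃o ℝ := (hH.strictMono k).orderIsoOfSurjective (ap k) k.1.unop.surjective
  have image_isGLB : IsGLB (ap k '' hH.expandingTranslates x) (ap k w) := e.isGLB_image'.2 hw
  rw [hH.image_expandingTranslates hk] at image_isGLB
  exact image_isGLB.unique hw

theorem ap_comm_of_fixed (hH : IsChainlessOn H a b) {w : ℝ}
    (hw : ∀ k ∈ hH.leftSlope.ker, ap k w = w) (g h : H) :
    ap g (ap h w) = ap h (ap g w) := by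
  have commutator_mem : g * h * g⁻¹ * h⁻¹ ∈ hH.leftSlope.ker := by
    simp only [MonoidHom.mem_ker, map_mul, map_inv]
    rw [mul_inv_cancel_comm, mul_inv_cancel]
  calc ap g (ap h w) = ap (h * g : H) (ap (g * h * g⁻¹ * h⁻¹ : H) w) := by
        rw [hw _ commutator_mem]
        rfl
    _ = ap (g * h * g⁻¹ * h⁻¹ * (h * g) : H) w := rfl
    _ = ap (g * h : H) w := by rw [show g * h * g⁻¹ * h⁻¹ * (h * g) = g * h by group]
    _ = ap h (ap g w) := rfl

theorem ap_ap_of_fixed (hH : IsChainlessOn H a b) {w : ℝ}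
    (hw : ∀ k ∈ hH.leftSlope.ker, ap k w = w) (g : H) :
    ∀ k ∈ hH.leftSlope.ker, ap k (ap g w) = ap g w := fun k hk => by
  rw [hH.ap_comm_of_fixed hw, hw k hk]

theorem exists_nhds_ap_eq_affine (hH : IsChainlessOn H a b) (hp : p ∈ frontier (Ioo a b))
    {f : H} (hf : hH.slope hp f < 1) :
    ∃ s ∈ 𝓝[Ioo a b] p, IsOpen s ∧ ∀ w ∈ s, (∀ k ∈ hH.leftSlope.ker, ap k w = w) →
      ∀ q : H, ap q w ∈ s → ap q w = p + hH.slope hp q * (w - p) := by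
  obtain ⟨ε, hε, hball⟩ := Metric.mem_nhdsWithin_iff.1 (hH.eventually_ap_eq hp f)
  have hμ₀ : (0 : ℝ) < hH.slope hp f := (hH.slope hp f).2
  have hμ : |(hH.slope hp f : ℝ)| < 1 := by rwa [abs_of_pos hμ₀]
  refine ⟨Metric.ball p ε ∩ Ioo a b, inter_mem (nhdsWithin_le_nhds (Metric.ball_mem_nhds p hε))
    self_mem_nhdsWithin, Metric.isOpen_ball.inter isOpen_Ioo, fun w hws hw q hqw => ?_⟩
  have mapsTo : MapsTo (ap f) (Metric.ball p ε ∩ Ioo a b) (Metric.ball p ε ∩ Ioo a b) := by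
    refine fun x hx => ⟨?_, hH.mapsTo_ap f hx.2⟩
    have hx_dist : |x - p| < ε := hx.1
    rw [Metric.mem_ball, hball hx, Real.dist_eq, add_sub_cancel_left, abs_mul]
    exact (mul_le_of_le_one_left (abs_nonneg _) hμ.le).trans_lt hx_dist
  refine eq_affine_of_commute_contraction hμ₀.ne' hμ mapsTo (fun x hx => hball hx)
    ((hH.eventually_ap_eq hp q).filter_mono (nhdsWithin_mono p inter_subset_right)) hws hqw
    fun n => ?_
  simpa only [SubmonoidClass.coe_pow, ap_pow] using hH.ap_comm_of_fixed hw q (f ^ n)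

theorem eventually_slopes_proportional (hH : IsChainlessOn H a b) {c : H}
    (hc : 1 < hH.leftSlope c) :
    ∀ᶠ w in 𝓝[Ioo a b] a, (∀ k ∈ hH.leftSlope.ker, ap k w = w) →
      ∃ κ : ℝ, ∀ᶠ z in 𝓝[>] w, ∀ q : H, ap q w = z →
        1 - (hH.rightSlope q : ℝ) = κ * (hH.leftSlope q - 1) := by
  obtain ⟨s, hs, s_open, s_affine⟩ :=
    hH.exists_nhds_ap_eq_affine hH.left_mem_frontier (f := c⁻¹)
      (by rw [map_inv]; exact inv_lt_one'.2 hc)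
  obtain ⟨t, ht, t_open, t_affine⟩ :=
    hH.exists_nhds_ap_eq_affine hH.right_mem_frontier (hH.rightSlope_lt_one hc)
  filter_upwards [hs, self_mem_nhdsWithin] with w hws hwab hw
  obtain ⟨n, hn⟩ := ((hH.tendsto_iterate_ap hc hwab).eventually ht).exists
  rw [← ap_pow, ← SubmonoidClass.coe_pow] at hn
  set C : H := c ^ n
  set v := ap C w
  -- Since `q` commutes with `C` on `w`, its displacement at `v` is the displacement at `w`
  -- multiplied by the right derivative `m` of `C`; linearity of `q` evaluates both displacements.
  let m := derivWithin (ap C) (Ioi w) w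
  have C_affine : ∀ᶠ z in 𝓝[>] w, ap C z = v + m * (z - w) :=
    (hH.isPL C C.2).eventually_ap_eq_affine (convex_Ioi w) isOpen_Ioi (by simp)
  have C_mem : ∀ᶠ z in 𝓝[>] w, ap C z ∈ t := nhdsWithin_le_nhds
    ((hH.continuous C).continuousAt.eventually (t_open.mem_nhds hn))
  have hvb : b - v ≠ 0 := (sub_pos.2 (hH.mapsTo_ap C hwab).2).ne'
  refine ⟨m * (w - a) / (b - v), ?_⟩
  filter_upwards [C_affine, C_mem, nhdsWithin_le_nhds (s_open.mem_nhds hws)] with z hzC hzt hzs q hq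
  subst hq
  have hqw := s_affine w hws hw q hzs
  have hcomm : ap q v = ap C (ap q w) := hH.ap_comm_of_fixed hw q C
  have hqv := t_affine v hn (hH.ap_ap_of_fixed hw C) q (hcomm ▸ hzt)
  rw [hcomm, hzC, hqw] at hqv
  field_simp
  linarith

theorem exists_small_expansion (hH : IsChainlessOn H a b)
    (hdense : ∀ δ > 1, ∃ g : H, 1 < hH.leftSlope g ∧ hH.leftSlope g < δ) {w z : ℝ}
    (hx : x ∈ Ioo a b) (hw : IsGLB (hH.expandingTranslates x) w) (hz : w < z) :
    ∃ g : H, 1 < hH.leftSlope g ∧ ap (g * g : H) w < z := by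
  obtain ⟨_, ⟨h, hh, rfl⟩, -, hhz⟩ := hw.exists_between hz
  obtain ⟨δ, hδ, hδh⟩ := exists_pow_lt_of_one_lt (show 1 < hH.leftSlope h from hh) 3
  obtain ⟨g, hg, hgδ⟩ := hdense δ hδ
  have hg3 : hH.leftSlope (g * (g * g)) < hH.leftSlope h := by
    rw [map_mul, map_mul, ← pow_two, ← pow_succ']
    exact (pow_left_strictMono (by simp) hgδ).trans hδh
  refine ⟨g, hg, ?_⟩
  calc ap (g * g : H) w ≤ ap (g * g : H) (ap g x) :=
        (hH.strictMono _).monotone (hw.1 (mem_image_of_mem _ hg))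
    _ = ap (g * (g * g) : H) x := rfl
    _ < ap h x := hH.ap_lt_ap_of_leftSlope_lt hg3 hx
    _ < z := hhz

theorem frequently_exists_isGLB (hH : IsChainlessOn H a b) {c : H} (hc : 1 < hH.leftSlope c) :
    ∃ᶠ w in 𝓝[Ioo a b] a, ∃ x ∈ Ioo a b, IsGLB (hH.expandingTranslates x) w := by
  rw [nhdsWithin_Ioo_eq_nhdsGT hH.lt, (nhdsGT_basis a).frequently_iff]
  intro u hau
  obtain ⟨y, hay, hyub⟩ := exists_between (lt_min hau hH.lt)
  obtain ⟨hyu, hyb⟩ := lt_min_iff.1 hyub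
  have hx : ap (c⁻¹ : H) y ∈ Ioo a b := hH.mapsTo_ap c⁻¹ ⟨hay, hyb⟩
  obtain ⟨w, hw⟩ := hH.exists_isGLB_expandingTranslates hc hx
  have haw : a < w := hx.1.trans_le (hw.2 (hH.mem_lowerBounds_expandingTranslates hx))
  have hwy : w ≤ y := by
    have : w ≤ ap c (ap (c⁻¹ : H) y) := hw.1 (mem_image_of_mem _ hc)
    rwa [InvMemClass.coe_inv, ap_ap_inv] at this
  exact ⟨w, ⟨haw, hwy.trans_lt hyu⟩, _, hx, hw⟩

theorem exists_leftSlope_gap (hH : IsChainlessOn H a b) {c : H} (hc : 1 < hH.leftSlope c) :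
    ∃ δ > 1, Disjoint (hH.leftSlope.range : Set {x : ℝ // 0 < x}) (Ioo 1 δ) := by
  by_contra! hnot
  have hdense (δ : {x : ℝ // 0 < x}) (hδ : 1 < δ) :
      ∃ g : H, 1 < hH.leftSlope g ∧ hH.leftSlope g < δ := by
    obtain ⟨_, ⟨g, rfl⟩, hg⟩ := not_disjoint_iff.1 (hnot δ hδ)
    exact ⟨g, hg⟩
  obtain ⟨w, ⟨x, hx, hw⟩, proportional, hwab⟩ := ((hH.frequently_exists_isGLB hc).and_eventually
    ((hH.eventually_slopes_proportional hc).and self_mem_nhdsWithin)).exists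
  obtain ⟨κ, hκ⟩ := proportional fun k => hH.ap_eq_of_isGLB_expandingTranslates hw
  obtain ⟨z, hwz, hz⟩ := mem_nhdsGT_iff_exists_Ioo_subset.1 hκ
  obtain ⟨g, hg, hggz⟩ := hH.exists_small_expansion hdense hx hw hwz
  have hwg : w < ap g w := hH.lt_ap_of_one_lt_leftSlope hg hwab
  have hgg : ap g w < ap (g * g : H) w := hH.strictMono g hwg
  have slope_g := hz ⟨hwg, hgg.trans hggz⟩ g rfl
  have slope_gg := hz ⟨hwg.trans hgg, hggz⟩ (g * g) rfl
  rw [map_mul, map_mul, Positive.val_mul, Positive.val_mul] at slope_gg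
  set ρ := (hH.rightSlope g : ℝ)
  set μ := (hH.leftSlope g : ℝ)
  have hρ : ρ < 1 := hH.rightSlope_lt_one hg
  have hμ : 1 < μ := hg
  have factored : (1 - ρ) * (1 + ρ) = (1 - ρ) * (1 + μ) := by
    linear_combination slope_gg - (1 + μ) * slope_g
  linarith [mul_left_cancel₀ (sub_pos.2 hρ).ne' factored]

theorem exists_leftSlope_mem_zpowers (hH : IsChainlessOn H a b) (hg : hH.leftSlope g ≠ 1) :
    ∃ c : H, hH.leftSlope c ≠ 1 ∧
      ∀ h : H, hH.leftSlope h ∈ Subgroup.zpowers (hH.leftSlope c) := by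
  obtain ⟨δ, hδ, hgap⟩ :
      ∃ δ > 1, Disjoint (hH.leftSlope.range : Set {x : ℝ // 0 < x}) (Ioo 1 δ) := by
    rcases hg.lt_or_gt with hlt | hgt
    · exact hH.exists_leftSlope_gap (c := g⁻¹) (by rw [map_inv]; exact one_lt_inv'.2 hlt)
    · exact hH.exists_leftSlope_gap hgt
  obtain ⟨γ, hγ⟩ := Subgroup.cyclic_of_isolated_one hδ hgap
  rw [← Subgroup.zpowers_eq_closure] at hγ
  obtain ⟨c, rfl⟩ : γ ∈ hH.leftSlope.range := hγ ▸ Subgroup.mem_zpowers γ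
  have range_le (h : H) : hH.leftSlope h ∈ Subgroup.zpowers (hH.leftSlope c) :=
    hγ ▸ MonoidHom.mem_range.2 ⟨h, rfl⟩
  refine ⟨c, fun hc => hg ?_, range_le⟩
  simpa only [hc, Subgroup.zpowers_one_eq_bot, Subgroup.mem_bot] using range_le g

theorem existsUnique_zpow_mul_fixesEnds (hH : IsChainlessOn H a b) {c : H}
    (hc : hH.leftSlope c ≠ 1) (hg : hH.leftSlope g ∈ Subgroup.zpowers (hH.leftSlope c)) :
    ∃! p : ℤ × PermR, (p.2 ∈ H ∧ FixesEnds p.2 a b) ∧ (g : PermR) = (c : PermR) ^ p.1 * p.2 := by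
  obtain ⟨⟨n, k⟩, ⟨hk, hgk⟩, unique⟩ :=
    existsUnique_zpow_mul_ker hH.leftSlope (not_isOfFinOrder_of_isMulTorsionFree hc) hg
  refine ⟨(n, k), ⟨⟨k.2, hH.fixesEnds_iff_mem_ker_leftSlope.2 hk⟩, congrArg _ hgk⟩, ?_⟩
  rintro ⟨n', k'⟩ ⟨⟨hk'H, hk'⟩, hgk'⟩
  have := unique (n', ⟨k', hk'H⟩) ⟨hH.fixesEnds_iff_mem_ker_leftSlope.1 hk', Subtype.ext hgk'⟩
  exact congrArg (Prod.map id Subtype.val) this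

end IsChainlessOn

theorem statement7 (H : Subgroup PermR) (hPL : ∀ g ∈ H, IsPL g)
    (hchainless : ¬ AdmitsTransitionChain H) (a b : ℝ) (hab : a < b)
    (hsingle : GSupp H = Ioo a b)
    (hreal : ∃ h ∈ H, RealisesLeftEnd h a b ∨ RealisesRightEnd h a b) :
    ∃ c ∈ H, IsOrbital c a b ∧
      H = Subgroup.closure ({c} ∪ {g : PermR | g ∈ H ∧ FixesEnds g a b}) ∧
      ∀ h ∈ H, ∃! p : ℤ × PermR, (p.2 ∈ H ∧ FixesEnds p.2 a b) ∧ h = c ^ p.1 * p.2 := by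
  have hH : IsChainlessOn H a b := ⟨⟨hab, hPL, hsingle⟩, hchainless⟩
  obtain ⟨h, hhH, hh⟩ := hreal
  have h_slope : hH.leftSlope ⟨h, hhH⟩ ≠ 1 :=
    (hH.isOrbital_iff_slope_ne_one _).1 (hH.isOrbital_of_realises_end (g := ⟨h, hhH⟩) hh)
  obtain ⟨c, c_slope, generates⟩ := hH.exists_leftSlope_mem_zpowers h_slope
  have decomposition (g : PermR) (hg : g ∈ H) :=
    hH.existsUnique_zpow_mul_fixesEnds c_slope (generates ⟨g, hg⟩)
  refine ⟨c, c.2, (hH.isOrbital_iff_slope_ne_one _).2 c_slope,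
    le_antisymm (fun g hg => ?_) ((Subgroup.closure_le H).2 ?_), decomposition⟩
  · obtain ⟨⟨n, k⟩, ⟨hk, rfl⟩, -⟩ := decomposition g hg
    have hc := Subgroup.subset_closure
      (mem_union_left {g | g ∈ H ∧ FixesEnds g a b} (mem_singleton (c : PermR)))
    exact mul_mem (zpow_mem hc n) (Subgroup.subset_closure (mem_union_right _ hk))
  · rintro g (rfl | hg)
    exacts [c.2, hg.1]

end PLPaper
end

section
/- Suppose H ≤ PL₊(I) is generated by a finite set Z of nice generators, and let S_Z be the set of signed orbitals associated to the elements of Z. Then H is soluble, and the derived length of H equals the largest height of a tower of signed orbitals contained in S_Z. -/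
open Set

namespace PLPaper

/-- `Z` is a set of nice generators:
(Z0) each `h ∈ Z` has exactly one orbital;
(Z1) no pair of elements of `Z` forms a transition chain or a one-sided overlap;
(Z2) distinct elements of `Z` have distinct orbitals;
(Z3) for each `h ∈ Z` there is `r ∈ A_h` such that every orbital of an element
of `Z` properly contained in `A_h` is contained in `(r, r·h)`. -/
def IsNiceSet (Z : Set PermR) : Prop :=
  (∀ h ∈ Z, (∃ a b : ℝ, IsOrbital h a b) ∧
    ∀ a b a' b' : ℝ, IsOrbital h a b → IsOrbital h a' b' → a = a' ∧ b = b') ∧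
  (∀ g ∈ Z, ∀ h ∈ Z, ¬ ElemsTransitionChain g h ∧ ¬ ElemsOneSidedOverlap g h) ∧
  (∀ g ∈ Z, ∀ h ∈ Z, g ≠ h → ∀ a b : ℝ, IsOrbital g a b → ¬ IsOrbital h a b) ∧
  (∀ h ∈ Z, ∀ a b : ℝ, IsOrbital h a b → ∃ r ∈ Ioo a b,
    ∀ h' ∈ Z, ∀ a' b' : ℝ, IsOrbital h' a' b' → Ioo a' b' ⊂ Ioo a b →
      Ioo a' b' ⊆ Ioo r (ap h r))

/-- The set of signed orbitals associated to the elements of `Z`. -/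
def SignedOrbitals (Z : Set PermR) : Set ((ℝ × ℝ) × PermR) :=
  {p | p.2 ∈ Z ∧ IsOrbital p.2 p.1.1 p.1.2}

/-!
Let `PermR` act on the left of the line by `g • x = x · g⁻¹`. The supports of nice generators are
laminar, and the supports strictly inside that of a generator `m` all lie in one interval
`F = (r, r · m)`, whose translates by the powers of `m` are pairwise disjoint.

Upper bound. On the support of an outermost generator `m`, the whole group acts as `⟨B, m⟩` does,
where `B` is generated by the generators whose supports lie strictly inside. The commutator
subgroup of `⟨B, m⟩` lies in the subgroup generated by the conjugates of `B` by powers of `m`; these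
have disjoint supports, so that subgroup has the derived length of `B`. Each level of nesting thus
adds at most one to the derived length.

Lower bound. If `m` is the largest element of a chain and `B` is generated by the others, then
`⁅b, m⁆` acts on `F` as `b` does. Hence `⁅⟨B, m⟩, ⟨B, m⟩⁆` realizes on `F` every element of `B`, and
each generator in a chain adds at least one to the derived length.
-/

open Function Pointwise
open scoped commutatorElement

section IteratedCommutator

variable {G : Type*} [Group G]

/-- The derived series of a subgroup `K`, computed inside the ambient group. -/
def iteratedCommutator (K : Subgroup G) (n : ℕ) : Subgroup G :=
  (fun L : Subgroup G => ⁅L, L⁆)^[n] K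

theorem iteratedCommutator_succ (K : Subgroup G) (n : ℕ) :
    iteratedCommutator K (n + 1) = ⁅iteratedCommutator K n, iteratedCommutator K n⁆ :=
  Function.iterate_succ_apply' _ n K

theorem iteratedCommutator_commutator (K : Subgroup G) (n : ℕ) :
    iteratedCommutator ⁅K, K⁆ n = iteratedCommutator K (n + 1) :=
  (Function.iterate_succ_apply _ n K).symm

theorem map_subtype_derivedSeries (K : Subgroup G) (n : ℕ) :
    (derivedSeries K n).map K.subtype = iteratedCommutator K n := by
  induction n with
  | zero => rw [derivedSeries_zero, ← MonoidHom.range_eq_map, Subgroup.range_subtype]; rfl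
  | succ n ih => rw [derivedSeries_succ, Subgroup.map_commutator, ih, iteratedCommutator_succ]

theorem derivedSeries_eq_bot_iff (K : Subgroup G) (n : ℕ) :
    derivedSeries K n = ⊥ ↔ iteratedCommutator K n = ⊥ := by
  rw [← map_subtype_derivedSeries, Subgroup.map_eq_bot_iff_of_injective _ K.subtype_injective]

theorem monotone_commutator_self : Monotone fun L : Subgroup G => ⁅L, L⁆ :=
  fun _ _ h => Subgroup.commutator_mono h h

theorem iteratedCommutator_mono {K L : Subgroup G} (h : K ≤ L) (n : ℕ) :
    iteratedCommutator K n ≤ iteratedCommutator L n :=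
  monotone_commutator_self.iterate n h

theorem iteratedCommutator_le (K : Subgroup G) (n : ℕ) : iteratedCommutator K n ≤ K :=
  monotone_commutator_self.antitone_iterate_of_map_le K.commutator_le_self n.zero_le

theorem iteratedCommutator_map {G' : Type*} [Group G'] (f : G →* G') (K : Subgroup G) (n : ℕ) :
    iteratedCommutator (K.map f) n = (iteratedCommutator K n).map f :=
  (Function.Semiconj.iterate_right
    (fun L : Subgroup G => Subgroup.map_commutator L L f) n K).symm

theorem commutator_sup_le_of_le_normalizer {N C : Subgroup G} [IsMulCommutative C]
    (hC : C ≤ Subgroup.normalizer N) : ⁅N ⊔ C, N ⊔ C⁆ ≤ N := by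
  have conj_mem {c n : G} (hc : c ∈ C) (hn : n ∈ N) : c * n * c⁻¹ ∈ N :=
    (Subgroup.mem_normalizer_iff.1 (hC hc) n).1 hn
  rw [Subgroup.commutator_le]
  simp only [← SetLike.mem_coe, Subgroup.coe_mul_of_right_le_normalizer_left N C hC]
  rintro _ ⟨n, hn, c, hc, rfl⟩ _ ⟨n', hn', c', hc', rfl⟩
  have hcc' : c * c' = c' * c := setLike_mul_comm hc hc'
  have expand : ⁅n * c, n' * c'⁆ = n * (c * n' * c⁻¹) * (c' * n⁻¹ * c'⁻¹) * n'⁻¹ := by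
    calc ⁅n * c, n' * c'⁆ = n * c * n' * c⁻¹ * (c * c') * c⁻¹ * n⁻¹ * c'⁻¹ * n'⁻¹ := by
          simp only [commutatorElement_def]; group
      _ = n * (c * n' * c⁻¹) * (c' * n⁻¹ * c'⁻¹) * n'⁻¹ := by rw [hcc']; group
  exact expand ▸ mul_mem (mul_mem (mul_mem hn (conj_mem hc hn'))
    (conj_mem hc' (inv_mem hn))) (inv_mem hn')

theorem commutator_sup_zpowers_le (B : Subgroup G) (m : G) :
    ⁅B ⊔ Subgroup.zpowers m, B ⊔ Subgroup.zpowers m⁆ ≤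
      ⨆ k : ℤ, B.map (MulAut.conj (m ^ k)).toMonoidHom := by
  set N : Subgroup G := ⨆ k : ℤ, B.map (MulAut.conj (m ^ k)).toMonoidHom with hN
  have hBN : B ≤ N :=
    fun b hb => Subgroup.mem_iSup_of_mem 0 ⟨b, hb, by simp⟩
  have hmN : m ∈ Subgroup.normalizer (N : Set G) := by
    rw [Subgroup.mem_normalizer_iff_map_conj_eq, hN, Subgroup.map_iSup]
    refine (iSup_congr fun k => ?_).trans ((Equiv.addLeft (1 : ℤ)).iSup_comp)
    rw [Subgroup.map_map]
    congr 1
    ext b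
    simp [zpow_add, mul_assoc]
  refine (monotone_commutator_self (sup_le_sup_right hBN _)).trans ?_
  exact commutator_sup_le_of_le_normalizer ((Subgroup.zpowers_le).2 hmN)

end IteratedCommutator

section Agreement

variable {G α : Type*} [Group G] [MulAction G α]

/-- The pairs `(g, c)` such that `g` preserves `F` and acts on it in the same way as `c`. -/
def agreeOn (F : Set α) : Subgroup (G × G) where
  carrier := {p | p.1 • F = F ∧ ∀ x ∈ F, p.1 • x = p.2 • x}
  one_mem' := by simp
  mul_mem' := by
    rintro ⟨a, c⟩ ⟨b, d⟩ ⟨ha, hac⟩ ⟨hb, hbd⟩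
    refine ⟨by simp_all [mul_smul], fun x hx => ?_⟩
    have hbx : b • x ∈ F := hb ▸ smul_mem_smul_set hx
    simp_all [mul_smul]
  inv_mem' := by
    rintro ⟨a, c⟩ ⟨ha, hac⟩
    refine ⟨inv_smul_eq_iff.2 ha.symm, fun x hx => ?_⟩
    have hax : a⁻¹ • x ∈ F := mem_smul_set_iff_inv_smul_mem.1 (ha.symm ▸ hx)
    simpa [eq_inv_smul_iff] using (hac _ hax).symm

/-- The elements of `G` which preserve `F` and act on it as some element of `L` does. -/
def actingLike (F : Set α) (L : Subgroup G) : Subgroup G :=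
  (agreeOn F ⊓ L.comap (MonoidHom.snd G G)).map (MonoidHom.fst G G)

variable {F F' : Set α} {K L B : Subgroup G} {g m : G}

theorem mem_actingLike :
    g ∈ actingLike F L ↔ g • F = F ∧ ∃ c ∈ L, ∀ x ∈ F, g • x = c • x := by
  constructor
  · rintro ⟨⟨g, c⟩, ⟨⟨hF, hgc⟩, hc⟩, rfl⟩
    exact ⟨hF, c, hc, hgc⟩
  · rintro ⟨hF, c, hc, hgc⟩
    exact ⟨(g, c), ⟨⟨hF, hgc⟩, hc⟩, rfl⟩

theorem mem_actingLike_of_mem (hg : g • F = F) (hgL : g ∈ L) : g ∈ actingLike F L :=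
  mem_actingLike.2 ⟨hg, g, hgL, fun _ _ => rfl⟩

theorem mem_actingLike_of_forall_smul_eq (hg : ∀ x ∈ F, g • x = x) : g ∈ actingLike F L :=
  mem_actingLike.2 ⟨MulAction.set_mem_fixedBy_of_subset_fixedBy hg, 1, one_mem L,
    fun x hx => by rw [hg x hx, one_smul]⟩

theorem smul_eq_of_mem_actingLike_bot (hg : g ∈ actingLike F (⊥ : Subgroup G)) {x : α}
    (hx : x ∈ F) : g • x = x := by
  obtain ⟨-, c, rfl, hgc⟩ := mem_actingLike.1 hg
  rw [hgc x hx, one_smul]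

theorem iteratedCommutator_le_actingLike (h : K ≤ actingLike F L) (n : ℕ) :
    iteratedCommutator K n ≤ actingLike F (iteratedCommutator L n) := by
  set P : Subgroup (G × G) := agreeOn F ⊓ L.comap (MonoidHom.snd G G)
  have hsnd : (iteratedCommutator P n).map (MonoidHom.snd G G) ≤ iteratedCommutator L n := by
    rw [← iteratedCommutator_map]
    exact iteratedCommutator_mono (Subgroup.map_le_iff_le_comap.2 inf_le_right) n
  calc iteratedCommutator K n
      ≤ iteratedCommutator (P.map (MonoidHom.fst G G)) n := iteratedCommutator_mono h n
    _ = (iteratedCommutator P n).map (MonoidHom.fst G G) := iteratedCommutator_map _ P n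
    _ ≤ actingLike F (iteratedCommutator L n) := Subgroup.map_mono
        (le_inf ((iteratedCommutator_le P n).trans inf_le_left)
          (Subgroup.map_le_iff_le_comap.1 hsnd))

theorem iteratedCommutator_eq_bot_of_forall_actingLike [FaithfulSMul G α] {n : ℕ}
    (h : ∀ x : α, ∃ F : Set α, x ∈ F ∧
      ∃ L : Subgroup G, K ≤ actingLike F L ∧ iteratedCommutator L n = ⊥) :
    iteratedCommutator K n = ⊥ := by
  refine (Subgroup.eq_bot_iff_forall _).2 fun g hg => eq_of_smul_eq_smul fun x : α => ?_
  obtain ⟨F, hxF, L, hKL, hL⟩ := h x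
  rw [one_smul]
  exact smul_eq_of_mem_actingLike_bot (hL ▸ iteratedCommutator_le_actingLike hKL n hg) hxF

theorem iteratedCommutator_iSup_eq_bot [FaithfulSMul G α] {ι : Type*} {F : ι → Set α}
    {A : ι → Subgroup G} (hF : Pairwise (Disjoint on F))
    (hA : ∀ i, A i ≤ fixingSubgroup G (F i)ᶜ) {n : ℕ} (hn : ∀ i, iteratedCommutator (A i) n = ⊥) :
    iteratedCommutator (⨆ i, A i) n = ⊥ := by
  refine iteratedCommutator_eq_bot_of_forall_actingLike (α := α) fun x => ?_
  have hfix {i} {a : G} (ha : a ∈ A i) {y : α} (hy : y ∉ F i) : a • y = y :=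
    (mem_fixingSubgroup_iff G).1 (hA i ha) y hy
  by_cases hx : ∃ i, x ∈ F i
  · obtain ⟨i, hxi⟩ := hx
    refine ⟨F i, hxi, A i, iSup_le fun j a ha => ?_, hn i⟩
    obtain rfl | hij := eq_or_ne i j
    · exact mem_actingLike_of_mem (MulAction.set_mem_fixedBy_of_movedBy_subset
        (compl_subset_comm.1 fun y hy => hfix ha hy)) ha
    · exact mem_actingLike_of_forall_smul_eq fun y hy => hfix ha ((hF hij).notMem_of_mem_left hy)
  · rw [not_exists] at hx
    refine ⟨{x}, rfl, ⊥, iSup_le fun j a ha => mem_actingLike_of_forall_smul_eq ?_,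
      le_bot_iff.1 (iteratedCommutator_le ⊥ n)⟩
    rintro y rfl
    exact hfix ha (hx j)

/-- `F` is a wandering set for `m`: its translates under the powers of `m` are disjoint. -/
def IsWandering (m : G) (F : Set α) : Prop :=
  Pairwise (Disjoint on fun k : ℤ => m ^ k • F)

theorem iteratedCommutator_sup_zpowers_eq_bot [FaithfulSMul G α] (hF : IsWandering m F)
    (hB : B ≤ fixingSubgroup G Fᶜ) {n : ℕ} (hn : iteratedCommutator B n = ⊥) :
    iteratedCommutator (B ⊔ Subgroup.zpowers m) (n + 1) = ⊥ := by
  rw [← iteratedCommutator_commutator, eq_bot_iff]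
  refine (iteratedCommutator_mono (commutator_sup_zpowers_le B m) n).trans (le_of_eq ?_)
  refine iteratedCommutator_iSup_eq_bot hF (fun k => ?_) fun k => ?_
  · rw [← smul_set_compl, SubMulAction.fixingSubgroup_smul_eq_fixingSubgroup_map_conj]
    exact Subgroup.map_mono hB
  · rw [iteratedCommutator_map, hn, Subgroup.map_bot]

-- `⁅b, m⁆ = b * (m * b⁻¹ * m⁻¹)` acts on `F` as `b`, the other factor being supported in `m • F`.
theorem le_actingLike_commutator (hF : IsWandering m F) (hB : B ≤ fixingSubgroup G Fᶜ)
    (hBK : B ≤ K) (hm : m ∈ K) : B ≤ actingLike F ⁅K, K⁆ := by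
  intro b hb
  have hfix {c : G} (hc : c ∈ B) {y : α} (hy : y ∉ F) : c • y = y :=
    (mem_fixingSubgroup_iff G).1 (hB hc) y hy
  refine mem_actingLike.2 ⟨MulAction.set_mem_fixedBy_of_movedBy_subset
    (compl_subset_comm.1 fun y hy => hfix hb hy), ⁅b, m⁆,
    Subgroup.commutator_mem_commutator (hBK hb) hm, fun x hx => ?_⟩
  have hmx : m⁻¹ • x ∉ F := by
    have hdisj : Disjoint F (m • F) := by
      simpa only [onFun, zpow_zero, one_smul, zpow_one] using hF zero_ne_one
    exact fun h => hdisj.notMem_of_mem_left hx (mem_smul_set_iff_inv_smul_mem.2 h)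
  rw [commutatorElement_def, mul_smul, mul_smul, mul_smul, hfix (inv_mem hb) hmx, smul_inv_smul]

theorem iteratedCommutator_succ_ne_bot [FaithfulSMul G α] (hF : IsWandering m F)
    (hB : B ≤ fixingSubgroup G Fᶜ) (hBK : B ≤ K) (hm : m ∈ K) {n : ℕ}
    (hn : iteratedCommutator B n ≠ ⊥) : iteratedCommutator K (n + 1) ≠ ⊥ := by
  contrapose! hn
  refine (Subgroup.eq_bot_iff_forall _).2 fun b hb => eq_of_smul_eq_smul fun x : α => ?_
  rw [one_smul]
  by_cases hx : x ∈ F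
  · have hbF := iteratedCommutator_le_actingLike (le_actingLike_commutator hF hB hBK hm) n hb
    rw [iteratedCommutator_commutator, hn] at hbF
    exact smul_eq_of_mem_actingLike_bot hbF hx
  · exact (mem_fixingSubgroup_iff G).1 (hB (iteratedCommutator_le B n hb)) x hx

end Agreement

section NestedSystem

variable {G α : Type*} [Group G] [MulAction G α]

variable (α) in
/-- The points moved by `g`, i.e. the support of `g` for the action on `α`. -/
def movedBy (g : G) : Set α := (MulAction.fixedBy α g)ᶜ

theorem closure_le_fixingSubgroup_compl_iff {S : Set G} {F : Set α} :
    Subgroup.closure S ≤ fixingSubgroup G Fᶜ ↔ ∀ s ∈ S, movedBy α s ⊆ F := by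
  rw [Subgroup.closure_le]
  exact forall₂_congr fun s _ => (mem_fixingSubgroup_iff G).trans compl_subset_comm

variable (α) in
/-- The dynamical content of niceness, for an arbitrary action: `Z` consists of nontrivial
elements whose supports are laminar, and the supports properly inside that of `z ∈ Z` lie in a
single wandering set for `z`. -/
structure IsNestedSystem (Z : Set G) : Prop where
  movedBy_nonempty : ∀ z ∈ Z, (movedBy α z).Nonempty
  laminar : Z.Pairwise fun z w => Disjoint (movedBy α z) (movedBy α w) ∨
    movedBy α z ⊂ movedBy α w ∨ movedBy α w ⊂ movedBy α z
  exists_isWandering : ∀ z ∈ Z, ∃ F : Set α, IsWandering z F ∧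
    ∀ w ∈ Z, movedBy α w ⊂ movedBy α z → movedBy α w ⊆ F

variable {Z C : Set G} {m : G}

theorem chainHeight_ssubset_add_one_le (hm : m ∈ Z) :
    {w ∈ Z | movedBy α w ⊂ movedBy α m}.chainHeight ((· ⊆ ·) on movedBy α) + 1 ≤
      Z.chainHeight ((· ⊆ ·) on movedBy α) := by
  have : Nonempty {C : Set G // C ⊆ {w ∈ Z | movedBy α w ⊂ movedBy α m} ∧
      IsChain ((· ⊆ ·) on movedBy α) C} := ⟨∅, by simp⟩
  rw [chainHeight_eq_iSup, ENat.iSup_add]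
  refine iSup_le fun ⟨C, hCW, hC⟩ => ?_
  have hmC : m ∉ C := fun h => (hCW h).2.ne rfl
  rw [← encard_insert_of_notMem hmC]
  exact encard_le_chainHeight_of_isChain _ _
    (insert_subset hm fun w hw => (hCW hw).1)
    (hC.insert fun w hw _ => Or.inr (hCW hw).2.subset)

theorem closure_le_actingLike_movedBy (hm : ∀ w ∈ Z, w ≠ m →
    movedBy α w ⊂ movedBy α m ∨ Disjoint (movedBy α w) (movedBy α m)) :
    Subgroup.closure Z ≤ actingLike (movedBy α m)
      (Subgroup.closure {w ∈ Z | movedBy α w ⊂ movedBy α m} ⊔ Subgroup.zpowers m) := by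
  refine (Subgroup.closure_le _).2 fun w hw => ?_
  obtain rfl | hwm := eq_or_ne w m
  · exact mem_actingLike_of_mem (MulAction.set_mem_fixedBy_of_movedBy_subset subset_rfl)
      (Subgroup.mem_sup_right (Subgroup.mem_zpowers w))
  rcases hm w hw hwm with h | h
  · exact mem_actingLike_of_mem (MulAction.set_mem_fixedBy_of_movedBy_subset h.subset)
      (Subgroup.mem_sup_left (Subgroup.subset_closure ⟨hw, h⟩))
  · exact mem_actingLike_of_forall_smul_eq fun y hy => not_not.1 (h.notMem_of_mem_right hy)

namespace IsNestedSystem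

theorem mono (hZ : IsNestedSystem α Z) (hC : C ⊆ Z) : IsNestedSystem α C where
  movedBy_nonempty z hz := hZ.movedBy_nonempty z (hC hz)
  laminar := hZ.laminar.mono hC
  exists_isWandering z hz := by
    obtain ⟨F, hF, hsub⟩ := hZ.exists_isWandering z (hC hz)
    exact ⟨F, hF, fun w hw => hsub w (hC hw)⟩

theorem isChain_setOf_mem_movedBy (hZ : IsNestedSystem α Z) (x : α) :
    IsChain ((· ⊆ ·) on movedBy α) {z ∈ Z | x ∈ movedBy α z} := by
  rintro z ⟨hz, hxz⟩ w ⟨hw, hxw⟩ hne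
  rcases hZ.laminar hz hw hne with h | h | h
  · exact absurd hxw (h.notMem_of_mem_left hxz)
  · exact Or.inl h.subset
  · exact Or.inr h.subset

theorem exists_outermost (hZ : IsNestedSystem α Z)
    (hfin : Z.chainHeight ((· ⊆ ·) on movedBy α) ≠ ⊤) {z : G} (hz : z ∈ Z) {x : α}
    (hx : x ∈ movedBy α z) :
    ∃ m ∈ Z, x ∈ movedBy α m ∧ ∀ w ∈ Z, w ≠ m →
      movedBy α w ⊂ movedBy α m ∨ Disjoint (movedBy α w) (movedBy α m) := by
  have hchain := hZ.isChain_setOf_mem_movedBy x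
  have hC : {z ∈ Z | x ∈ movedBy α z}.Finite := encard_ne_top_iff.1 <|
    ne_top_of_le_ne_top hfin
      (encard_le_chainHeight_of_isChain _ _ (sep_subset _ _) hchain)
  obtain ⟨m, ⟨hm, hxm⟩, hmax⟩ := hC.exists_maximalFor (movedBy α) _ ⟨z, hz, hx⟩
  refine ⟨m, hm, hxm, fun w hw hne => ?_⟩
  rcases hZ.laminar hw hm hne with h | h | h
  · exact Or.inr h
  · exact Or.inl h
  · exact absurd (hmax ⟨hw, h.subset hxm⟩ h.subset) h.not_subset

theorem iteratedCommutator_closure_eq_bot [FaithfulSMul G α] {n : ℕ} (hZ : IsNestedSystem α Z)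
    (hn : Z.chainHeight ((· ⊆ ·) on movedBy α) ≤ n) :
    iteratedCommutator (Subgroup.closure Z) n = ⊥ := by
  induction n generalizing Z with
  | zero =>
    have hZe : Z = ∅ := by simpa using hn
    exact hZe ▸ Subgroup.closure_empty
  | succ n ih =>
    refine iteratedCommutator_eq_bot_of_forall_actingLike (α := α) fun x => ?_
    by_cases hx : ∃ z ∈ Z, x ∈ movedBy α z
    · obtain ⟨z, hz, hxz⟩ := hx
      obtain ⟨m, hm, hxm, hout⟩ :=
        hZ.exists_outermost (ne_top_of_le_ne_top (ENat.natCast_ne_top _) hn) hz hxz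
      obtain ⟨F, hF, hsub⟩ := hZ.exists_isWandering m hm
      have hinner := ih (hZ.mono (sep_subset _ fun w => movedBy α w ⊂ movedBy α m)) <|
        (ENat.add_le_add_iff_right ENat.one_ne_top).1 <|
          mod_cast (chainHeight_ssubset_add_one_le hm).trans hn
      exact ⟨movedBy α m, hxm, _, closure_le_actingLike_movedBy hout,
        iteratedCommutator_sup_zpowers_eq_bot hF
          (closure_le_fixingSubgroup_compl_iff.2 fun w hw => hsub w hw.1 hw.2) hinner⟩
    · push Not at hx
      have hfix : Subgroup.closure Z ≤ actingLike {x} ⊥ :=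
        (Subgroup.closure_le _).2 fun w hw => mem_actingLike_of_forall_smul_eq <|
          fun y hy => hy ▸ not_not.1 (hx w hw)
      exact ⟨{x}, rfl, ⊥, hfix, le_bot_iff.1 (iteratedCommutator_le ⊥ (n + 1))⟩

theorem iteratedCommutator_closure_ne_bot [FaithfulSMul G α] {n : ℕ} (hC : IsNestedSystem α C)
    (hchain : IsChain ((· ⊆ ·) on movedBy α) C) (hcard : C.encard = n + 1) :
    iteratedCommutator (Subgroup.closure C) n ≠ ⊥ := by
  induction n generalizing C with
  | zero =>
    obtain ⟨z, rfl⟩ := encard_eq_one.1 (by simpa using hcard)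
    obtain ⟨x, hx⟩ := hC.movedBy_nonempty z rfl
    intro h
    have hz1 : z = 1 := (Subgroup.eq_bot_iff_forall _).1 h z (Subgroup.subset_closure rfl)
    exact hx (by simp [hz1])
  | succ n ih =>
    have hfin : C.Finite := finite_of_encard_eq_coe (k := n + 1 + 1) (mod_cast hcard)
    have hne : C.Nonempty := encard_pos.1 (hcard ▸ pos_of_ne_zero (by simp))
    obtain ⟨m, hm, hmax⟩ := hfin.exists_maximalFor (movedBy α) _ hne
    obtain ⟨F, hF, hsub⟩ := hC.exists_isWandering m hm
    have hss : ∀ w ∈ C \ {m}, movedBy α w ⊂ movedBy α m := by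
      rintro w ⟨hw, hwm⟩
      have hle : movedBy α w ⊆ movedBy α m :=
        (hchain hw hm hwm).elim id fun h => hmax hw h
      rcases hC.laminar hw hm hwm with h | h | h
      · exact absurd (h.eq_bot_of_le hle) (hC.movedBy_nonempty w hw).ne_empty
      · exact h
      · exact absurd hle h.not_subset
    refine iteratedCommutator_succ_ne_bot (B := Subgroup.closure (C \ {m})) hF
      (closure_le_fixingSubgroup_compl_iff.2 fun w hw => hsub w hw.1 (hss w hw))
      (Subgroup.closure_mono sdiff_subset) (Subgroup.subset_closure hm)
      (ih (hC.mono sdiff_subset) (hchain.mono sdiff_subset) ?_)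
    rw [← encard_sdiff_singleton_add_one hm] at hcard
    exact_mod_cast (ENat.add_left_injective_of_ne_top ENat.one_ne_top) hcard

theorem derivedSeries_closure_eq_bot_iff [FaithfulSMul G α] (hZ : IsNestedSystem α Z) (n : ℕ) :
    derivedSeries (Subgroup.closure Z) n = ⊥ ↔
      Z.chainHeight ((· ⊆ ·) on movedBy α) ≤ n := by
  rw [derivedSeries_eq_bot_iff]
  refine ⟨fun h => ?_, hZ.iteratedCommutator_closure_eq_bot⟩
  by_contra! hlt
  obtain ⟨C, hCZ, hcard, hchain⟩ :=
    exists_isChain_of_le_chainHeight (n + 1) (by exact_mod_cast Order.add_one_le_of_lt hlt)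
  refine (hZ.mono hCZ).iteratedCommutator_closure_ne_bot hchain (by exact_mod_cast hcard) ?_
  exact le_bot_iff.1 (h ▸ iteratedCommutator_mono (Subgroup.closure_mono hCZ) n)

end IsNestedSystem

end NestedSystem

section Interval

variable {G α : Type*} [Group G] [LinearOrder α] [MulAction G α] {m : G}

theorem strictMono_zpow_smul (hm : StrictMono fun x : α => m • x) (k : ℤ) :
    StrictMono fun x : α => m ^ k • x := by
  have hpow (n : ℕ) : StrictMono fun x : α => m ^ n • x := by
    simpa only [← smul_iterate] using hm.iterate n
  cases k with
  | ofNat n => simpa using hpow n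
  | negSucc n =>
    intro x y hxy
    rw [← (hpow (n + 1)).lt_iff_lt]
    simpa using hxy

theorem smul_Ioo_of_strictMono (hm : StrictMono fun x : α => m • x) (a b : α) :
    m • Ioo a b = Ioo (m • a) (m • b) := by
  ext x
  rw [mem_smul_set_iff_inv_smul_mem, mem_Ioo, mem_Ioo, ← hm.lt_iff_lt, ← hm.lt_iff_lt (b := b),
    smul_inv_smul]

theorem isWandering_Ioo_smul (hm : StrictMono fun x : α => m • x) (r : α) :
    IsWandering m (Ioo (m • r) r) := by
  have htranslate (k : ℤ) : m ^ k • Ioo (m • r) r = Ioo (m ^ Order.succ k • r) (m ^ k • r) := by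
    rw [smul_Ioo_of_strictMono (strictMono_zpow_smul hm k), smul_smul, Order.succ_eq_add_one,
      zpow_add_one]
  rcases le_total r (m • r) with hr | hr
  · simp [IsWandering, Ioo_eq_empty_of_le hr, Pairwise, onFun]
  have hanti : Antitone fun k : ℤ => m ^ k • r := antitone_int_of_succ_le fun k => by
    rw [zpow_add_one, mul_smul]
    exact (strictMono_zpow_smul hm k).monotone hr
  simpa only [IsWandering, htranslate] using hanti.pairwise_disjoint_on_Ioo_succ

end Interval

section RealLine

/-- The left action of `PermR` on the line. As `PermR` acts on the right, `g • x` is `x · g⁻¹`. -/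
instance : MulAction PermR ℝ :=
  MulAction.compHom ℝ (MulEquiv.inv' (Equiv.Perm ℝ)).symm.toMonoidHom

variable {Z C : Set PermR} {T : Set ((ℝ × ℝ) × PermR)} {g h : PermR} {a b c d : ℝ}

theorem inv_smul_eq_ap (g : PermR) (x : ℝ) : g⁻¹ • x = ap g x := by
  change ap g⁻¹⁻¹ x = ap g x
  rw [inv_inv]

instance : FaithfulSMul PermR ℝ where
  eq_of_smul_eq_smul h := inv_injective (MulOpposite.unop_injective (Equiv.ext h))

theorem movedBy_eq_supp : movedBy ℝ = Supp := by
  ext g x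
  change g • x ≠ x ↔ ap g x ≠ x
  rw [← inv_smul_eq_ap]
  exact (inv_smul_eq_iff.trans eq_comm).not.symm

theorem isWandering_Ioo_ap (hg : StrictMono (ap g)) (r : ℝ) : IsWandering g (Ioo r (ap g r)) := by
  have hsmul : StrictMono fun x : ℝ => g • x := fun x y hxy => by
    rw [← hg.lt_iff_lt, ← inv_smul_eq_ap, ← inv_smul_eq_ap, inv_smul_smul, inv_smul_smul]
    exact hxy
  have hr : g • ap g r = r := by rw [← inv_smul_eq_ap, smul_inv_smul]
  simpa only [hr] using isWandering_Ioo_smul hsmul (ap g r)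

theorem exists_mem_Ioo_subset_of_isOpen {α : Type*} [ConditionallyCompleteLinearOrder α]
    [NoMinOrder α] [NoMaxOrder α] [TopologicalSpace α] [OrderTopology α] {U : Set α}
    (hU : IsOpen U) (hbelow : BddBelow U) (habove : BddAbove U) {x : α} (hx : x ∈ U) :
    ∃ a b, x ∈ Ioo a b ∧ Ioo a b ⊆ U ∧ a ∉ U ∧ b ∉ U := by
  obtain ⟨l, hl⟩ : (Uᶜ ∩ Iic x).Nonempty :=
    let ⟨l, hl⟩ := hbelow
    let ⟨l', hl'⟩ := exists_lt l
    ⟨l', fun h => (hl h).not_gt hl', hl'.le.trans (hl hx)⟩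
  obtain ⟨u, hu⟩ : (Uᶜ ∩ Ici x).Nonempty :=
    let ⟨u, hu⟩ := habove
    let ⟨u', hu'⟩ := exists_gt u
    ⟨u', fun h => (hu h).not_gt hu', (hu hx).trans hu'.le⟩
  obtain ⟨a, ha⟩ : ∃ a, IsGreatest (Uᶜ ∩ Iic x) a :=
    ⟨_, (hU.isClosed_compl.inter isClosed_Iic).isGreatest_csSup ⟨l, hl⟩
      (bddAbove_Iic.mono inter_subset_right)⟩
  obtain ⟨b, hb⟩ : ∃ b, IsLeast (Uᶜ ∩ Ici x) b :=
    ⟨_, (hU.isClosed_compl.inter isClosed_Ici).isLeast_csInf ⟨u, hu⟩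
      (bddBelow_Ici.mono inter_subset_right)⟩
  have hax : a ≠ x := fun h => ha.1.1 (h ▸ hx)
  have hxb : x ≠ b := fun h => hb.1.1 (h ▸ hx)
  refine ⟨a, b, ⟨ha.1.2.lt_of_ne hax, hb.1.2.lt_of_ne hxb⟩, fun y hy => ?_, ha.1.1, hb.1.1⟩
  by_contra hyU
  rcases le_total y x with hyx | hxy
  · exact hy.1.not_ge (ha.2 ⟨hyU, hyx⟩)
  · exact hy.2.not_ge (hb.2 ⟨hyU, hxy⟩)

theorem isOpen_supp (hg : StrictMono (ap g)) : IsOpen (Supp g) :=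
  isOpen_ne_fun (hg.monotone.continuous_of_surjective g.unop.surjective) continuous_id

theorem exists_isOrbital_of_mem_supp (hg : StrictMono (ap g))
    (hb : Bornology.IsBounded (Supp g)) {x : ℝ} (hx : x ∈ Supp g) :
    ∃ a b, IsOrbital g a b ∧ x ∈ Ioo a b := by
  obtain ⟨a, b, hxab, hab⟩ :=
    exists_mem_Ioo_subset_of_isOpen (isOpen_supp hg) hb.bddBelow hb.bddAbove hx
  exact ⟨a, b, ⟨hxab.1.trans hxab.2, hab⟩, hxab⟩

theorem IsPL.isBounded_supp (hg : IsPL g) : Bornology.IsBounded (Supp g) :=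
  (Metric.isBounded_Ioo 0 1).subset fun x hx => not_imp_comm.1 (hg.2.1 x) hx

theorem IsOrbital.disjoint_or_subset_or_subset (hg : IsOrbital g a b) (hh : IsOrbital h c d)
    (hgh : ¬ ElemsTransitionChain g h) (hhg : ¬ ElemsTransitionChain h g) :
    Disjoint (Ioo a b) (Ioo c d) ∨ Ioo a b ⊆ Ioo c d ∨ Ioo c d ⊆ Ioo a b := by
  have hgh' : a < c → b < d → b ≤ c := fun hac hbd =>
    not_lt.1 fun hcb => hgh ⟨a, b, c, d, hg, hh, hac, hcb, hbd⟩
  have hhg' : c < a → d < b → d ≤ a := fun hca hdb =>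
    not_lt.1 fun had => hhg ⟨c, d, a, b, hh, hg, hca, had, hdb⟩
  rw [Ioo_disjoint_Ioo, Ioo_subset_Ioo_iff hg.1, Ioo_subset_Ioo_iff hh.1]
  grind

namespace IsNiceSet

theorem eq_of_isOrbital_of_isOrbital (hZ : IsNiceSet Z) (hg : g ∈ Z) (hh : h ∈ Z)
    (hgab : IsOrbital g a b) (hhab : IsOrbital h a b) : g = h :=
  not_imp_comm.1 (fun hne => hZ.2.2.1 g hg h hh hne a b hgab) (not_not.2 hhab)

theorem supp_eq_Ioo (hZ : IsNiceSet Z) (hg : StrictMono (ap g))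
    (hb : Bornology.IsBounded (Supp g)) (hgZ : g ∈ Z) (hab : IsOrbital g a b) :
    Supp g = Ioo a b := by
  refine Subset.antisymm (fun x hx => ?_) hab.2.1
  obtain ⟨c, d, hcd, hxcd⟩ := exists_isOrbital_of_mem_supp hg hb hx
  obtain ⟨rfl, rfl⟩ := (hZ.1 g hgZ).2 a b c d hab hcd
  exact hxcd

theorem isNestedSystem (hZ : IsNiceSet Z) (hmono : ∀ g ∈ Z, StrictMono (ap g))
    (hsupp : ∀ g ∈ Z, Bornology.IsBounded (Supp g)) : IsNestedSystem ℝ Z := by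
  have hIoo {g : PermR} {a b : ℝ} (hg : g ∈ Z) (hab : IsOrbital g a b) : Supp g = Ioo a b :=
    hZ.supp_eq_Ioo (hmono g hg) (hsupp g hg) hg hab
  constructor <;> simp only [movedBy_eq_supp]
  · intro g hg
    obtain ⟨a, b, hab⟩ := (hZ.1 g hg).1
    exact hIoo hg hab ▸ nonempty_Ioo.2 hab.1
  · intro g hg h hh hne
    obtain ⟨a, b, hab⟩ := (hZ.1 g hg).1
    obtain ⟨c, d, hcd⟩ := (hZ.1 h hh).1
    have hsupp_ne : Ioo a b ≠ Ioo c d := fun heq => by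
      obtain ⟨hca, hbd⟩ := (Ioo_subset_Ioo_iff hab.1).1 heq.subset
      obtain ⟨hac, hdb⟩ := (Ioo_subset_Ioo_iff hcd.1).1 heq.superset
      obtain ⟨rfl, rfl⟩ : a = c ∧ b = d := ⟨hac.antisymm hca, hbd.antisymm hdb⟩
      exact hne (hZ.eq_of_isOrbital_of_isOrbital hg hh hab hcd)
    rw [hIoo hg hab, hIoo hh hcd]
    exact (hab.disjoint_or_subset_or_subset hcd (hZ.2.1 g hg h hh).1 (hZ.2.1 h hh g hg).1).imp_right
      (Or.imp (·.ssubset_of_ne hsupp_ne) (·.ssubset_of_ne hsupp_ne.symm))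
  · intro g hg
    obtain ⟨a, b, hab⟩ := (hZ.1 g hg).1
    obtain ⟨r, -, hr⟩ := hZ.2.2.2 g hg a b hab
    refine ⟨_, isWandering_Ioo_ap (hmono g hg) r, fun h hh hlt => ?_⟩
    obtain ⟨c, d, hcd⟩ := (hZ.1 h hh).1
    rw [hIoo hg hab, hIoo hh hcd] at hlt
    exact hIoo hh hcd ▸ hr h hh c d hcd hlt

theorem injOn_snd (hZ : IsNiceSet Z) : InjOn Prod.snd (SignedOrbitals Z) := by
  rintro ⟨⟨a, b⟩, g⟩ ⟨hg, hab⟩ ⟨⟨c, d⟩, -⟩ ⟨-, hcd⟩ rfl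
  obtain ⟨rfl, rfl⟩ := (hZ.1 g hg).2 a b c d hab hcd
  rfl

theorem snd_image_signedOrbitals (hZ : IsNiceSet Z) (hC : C ⊆ Z) :
    Prod.snd '' SignedOrbitals C = C := by
  refine Subset.antisymm (image_subset_iff.2 fun p hp => hp.1) fun g hg => ?_
  obtain ⟨a, b, hab⟩ := (hZ.1 g (hC hg)).1
  exact ⟨((a, b), g), ⟨hg, hab⟩, rfl⟩

theorem isTower_iff (hZ : IsNiceSet Z) (hmono : ∀ g ∈ Z, StrictMono (ap g))
    (hsupp : ∀ g ∈ Z, Bornology.IsBounded (Supp g)) (hT : T ⊆ SignedOrbitals Z) :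
    IsTower T ↔ IsChain ((· ⊆ ·) on Supp) (Prod.snd '' T) := by
  have hIoo (p) (hp : p ∈ T) : Supp p.2 = Ioo p.1.1 p.1.2 :=
    hZ.supp_eq_Ioo (hmono _ (hT hp).1) (hsupp _ (hT hp).1) (hT hp).1 (hT hp).2
  constructor
  · rintro ⟨-, hnested, -⟩ _ ⟨p, hp, rfl⟩ _ ⟨q, hq, rfl⟩ -
    simpa only [onFun, hIoo p hp, hIoo q hq] using hnested p hp q hq
  · refine fun hchain => ⟨fun p hp => (hT hp).2, fun p hp q hq => ?_, fun p hp q hq hpq => ?_⟩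
    · rw [← hIoo p hp, ← hIoo q hq]
      exact hchain.total (mem_image_of_mem _ hp) (mem_image_of_mem _ hq)
    · exact hZ.eq_of_isOrbital_of_isOrbital (hT hp).1 (hT hq).1 (hT hp).2 (hpq ▸ (hT hq).2)

end IsNiceSet

/-- The heights of the finite towers of signed orbitals of elements of `Z`. -/
def towerHeights (Z : Set PermR) : Set ℕ :=
  {n : ℕ | ∃ T : Set ((ℝ × ℝ) × PermR),
    T ⊆ SignedOrbitals Z ∧ IsTower T ∧ T.Finite ∧ T.ncard = n}

theorem towerHeights_nonempty (Z : Set PermR) : (towerHeights Z).Nonempty :=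
  ⟨0, ∅, empty_subset _, by simp [IsTower], finite_empty, ncard_empty _⟩

theorem IsNiceSet.chainHeight_le_iff (hZ : IsNiceSet Z) (hmono : ∀ g ∈ Z, StrictMono (ap g))
    (hsupp : ∀ g ∈ Z, Bornology.IsBounded (Supp g)) (n : ℕ) :
    Z.chainHeight ((· ⊆ ·) on Supp) ≤ n ↔ n ∈ upperBounds (towerHeights Z) := by
  constructor
  · rintro hn k ⟨T, hTZ, hT, hTfin, rfl⟩
    have hle : (Prod.snd '' T).encard ≤ n :=
      (encard_le_chainHeight_of_isChain _ _ (image_subset_iff.2 fun p hp => (hTZ hp).1)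
        ((hZ.isTower_iff hmono hsupp hTZ).1 hT)).trans hn
    rw [(hZ.injOn_snd.mono hTZ).encard_image, ← hTfin.cast_ncard_eq] at hle
    exact_mod_cast hle
  · contrapose!
    intro hlt hub
    obtain ⟨C, hCZ, hcard, hchain⟩ :=
      exists_isChain_of_le_chainHeight (n + 1) (mod_cast Order.add_one_le_of_lt hlt)
    have hSC : SignedOrbitals C ⊆ SignedOrbitals Z := fun p hp => ⟨hCZ hp.1, hp.2⟩
    rw [← hZ.snd_image_signedOrbitals hCZ] at hchain hcard
    rw [(hZ.injOn_snd.mono hSC).encard_image] at hcard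
    have hle := hub ⟨_, hSC, (hZ.isTower_iff hmono hsupp hSC).2 hchain,
      finite_of_encard_eq_coe hcard, rfl⟩
    rw [ncard_def, hcard] at hle
    exact n.lt_irrefl hle

theorem IsNiceSet.bddAbove_towerHeights (hZ : IsNiceSet Z) (hZfin : Z.Finite) :
    BddAbove (towerHeights Z) := by
  refine ⟨Z.ncard, ?_⟩
  rintro _ ⟨T, hT, -, -, rfl⟩
  exact ncard_le_ncard_of_injOn Prod.snd (fun p hp => (hT hp).1) (hZ.injOn_snd.mono hT) hZfin

theorem statement8_general (Z : Set PermR) (hZnice : IsNiceSet Z)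
    (hmono : ∀ g ∈ Z, StrictMono (ap g)) (hsupp : ∀ g ∈ Z, Bornology.IsBounded (Supp g))
    (hbdd : BddAbove (towerHeights Z)) :
    Group.IsSolvable (Subgroup.closure Z) ∧
    derivedLength (Subgroup.closure Z) = sSup (towerHeights Z) := by
  have hseries (n : ℕ) : derivedSeries (Subgroup.closure Z) n = ⊥ ↔
      n ∈ upperBounds (towerHeights Z) := by
    rw [(hZnice.isNestedSystem hmono hsupp).derivedSeries_closure_eq_bot_iff, movedBy_eq_supp,
      hZnice.chainHeight_le_iff hmono hsupp]
  refine ⟨⟨hbdd.imp fun n hn => (hseries n).2 hn⟩, ?_⟩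
  rw [derivedLength, ext hseries]
  exact csInf_upperBounds_eq_csSup hbdd (towerHeights_nonempty Z)

end RealLine

theorem statement8 (Z : Set PermR) (hZfin : Z.Finite) (hZnice : IsNiceSet Z)
    (H : Subgroup PermR) (hH : H = Subgroup.closure Z)
    (hPL : ∀ g ∈ H, IsPL g) :
    IsSolvable ↥H ∧
    derivedLength ↥H = sSup {n : ℕ | ∃ T : Set ((ℝ × ℝ) × PermR),
      T ⊆ SignedOrbitals Z ∧ IsTower T ∧ T.Finite ∧ T.ncard = n} := by
  subst hH
  have hZPL : ∀ g ∈ Z, IsPL g := fun g hg => hPL g (Subgroup.subset_closure hg)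
  exact statement8_general Z hZnice (fun g hg => (hZPL g hg).1)
    (fun g hg => (hZPL g hg).isBounded_supp) (hZnice.bddAbove_towerHeights hZfin)

end PLPaper
end
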